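/- arXiv:math/0009238 — 2 statements merged into one kernel-verified Lean document; each statement's English description precedes it below -/
import Mathlib

section
/- Let β = 1, i.e. w(x) = exp(−x) is the Laguerre weight, and let λ_N be as in the context. Then lim_{N→∞} λ_N / [ 2^{7/2} π^{3/2} e N^{1/4} exp(−4√N) ] = 1; equivalently, 2π/λ_N ≃ 2^{−5/2} π^{−1/2} e^{−1} N^{−1/4} exp(4√N) as N → ∞. -/
open MeasureTheory Real Filter Topology

/-!
The inverse `K` of the Hankel matrix is `PᵀP`, where the rows of `P` are the coefficient vectors of
the Laguerre polynomials, so `tr K = ∑ κ(n, n)` and `tr K² = ∑ κ(m, n)²` with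
`κ(m, n) = ∑ C(m, j) C(n, j) / j!²`. The largest eigenvalue `1 / lam N` of `K` lies between
`tr K² / tr K` and `tr K`, so it suffices to show `tr K² ~ (tr K)²`, i.e. that `K` is asymptotically
of rank one, and to compute `tr K`.

Since `C(n, j) ≈ nʲ / j!`, the summand of `e^{-4x} κ(m, n)` with `x = (mn)^{1/4}` is the fourth
power of a Poisson weight of rate `x`, times the birthday factors `m(m-1)⋯(m-j+1) / mʲ` and
`n(n-1)⋯(n-j+1) / nʲ`, which tend to `e^{-1/2}` on the relevant range `j = x + O(√x)`. The local
central limit theorem and dominated convergence then give `κ(m, n) ~ c x^{-3/2} e^{4x}` when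
`m^{1/4} - n^{1/4} → 0`. The rows `n` with `N - n = O(N^{5/8})` carry almost all of `tr K` and
satisfy `κ(m, n)² ~ κ(m, m) κ(n, n)` uniformly, whence the rank-one behaviour; the trace follows
from its increments by the Stolz–Cesàro theorem.
-/

section SymmetricMatrix

variable {ι : Type*} [Fintype ι] [DecidableEq ι] {A : Matrix ι ι ℝ} {μ : ℝ}

lemma isGreatest_spectrum_inv (hA : A.PosDef) (hμ : IsLeast (spectrum ℝ A) μ) :
    IsGreatest (spectrum ℝ A⁻¹) μ⁻¹ := by
  obtain ⟨u, rfl⟩ := hA.isUnit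
  have spectrum_pos : ∀ x ∈ spectrum ℝ (u : Matrix ι ι ℝ), 0 < x := by
    rw [hA.isHermitian.spectrum_real_eq_range_eigenvalues]
    rintro _ ⟨i, rfl⟩
    exact hA.eigenvalues_pos i
  rw [← Matrix.coe_units_inv, ← spectrum.map_inv]
  refine ⟨Set.inv_mem_inv.2 hμ.1, fun y hy ↦ ?_⟩
  exact le_inv_of_le_inv₀ (spectrum_pos μ hμ.1) (hμ.2 hy)

lemma trace_mul_self_eq_sum_sq_eigenvalues (hA : A.IsHermitian) :
    (A * A).trace = ∑ i, hA.eigenvalues i ^ 2 := by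
  conv_lhs => rw [hA.spectral_theorem, ← map_mul, Matrix.diagonal_mul_diagonal]
  rw [Unitary.conjStarAlgAut_apply, Matrix.trace_mul_cycle, Unitary.coe_star_mul_self, one_mul,
    Matrix.trace_diagonal]
  exact Finset.sum_congr rfl fun i _ ↦ (pow_two _).symm

lemma le_trace_of_mem_spectrum (hA : A.PosSemidef) (hμ : μ ∈ spectrum ℝ A) : μ ≤ A.trace := by
  rw [hA.isHermitian.spectrum_real_eq_range_eigenvalues] at hμ
  obtain ⟨i, rfl⟩ := hμ
  rw [hA.isHermitian.trace_eq_sum_eigenvalues]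
  exact Finset.single_le_sum (fun j _ ↦ hA.eigenvalues_nonneg j) (Finset.mem_univ i)

lemma trace_mul_self_le_of_mem_upperBounds_spectrum (hA : A.PosSemidef)
    (hμ : μ ∈ upperBounds (spectrum ℝ A)) : (A * A).trace ≤ μ * A.trace := by
  have eigenvalue_le (i : ι) : hA.isHermitian.eigenvalues i ≤ μ :=
    hμ (hA.isHermitian.eigenvalues_mem_spectrum_real i)
  rw [trace_mul_self_eq_sum_sq_eigenvalues hA.isHermitian,
    hA.isHermitian.trace_eq_sum_eigenvalues]
  simp only [RCLike.ofReal_real_eq_id, id_eq, Finset.mul_sum, pow_two]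
  exact Finset.sum_le_sum fun i _ ↦
    mul_le_mul_of_nonneg_right (eigenvalue_le i) (hA.eigenvalues_nonneg i)

end SymmetricMatrix

section LaguerreHankel

lemma sum_range_neg_one_pow_mul_choose_mul_choose (n k : ℕ) :
    ∑ j ∈ Finset.range (n + 1), (-1 : ℤ) ^ (n + j) * n.choose j * j.choose k =
      if n = k then 1 else 0 := by
  rcases lt_or_ge n k with hnk | hkn
  · rw [if_neg hnk.ne]
    refine Finset.sum_eq_zero fun j hj ↦ ?_
    rw [Nat.choose_eq_zero_of_lt ((Finset.mem_range_succ_iff.1 hj).trans_lt hnk), Nat.cast_zero,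
      mul_zero]
  obtain ⟨d, rfl⟩ := Nat.exists_eq_add_of_le hkn
  have term_eq (i : ℕ) : (-1 : ℤ) ^ (k + d + (k + i)) * (k + d).choose (k + i) * (k + i).choose k =
      (-1) ^ d * (k + d).choose k * ((-1) ^ i * d.choose i) := by
    have choose_mul : ((k + d).choose (k + i) * (k + i).choose k : ℤ) =
        (k + d).choose k * d.choose i := by
      have := Nat.choose_mul (n := k + d) (Nat.le_add_right k i)
      rw [Nat.add_sub_cancel_left, Nat.add_sub_cancel_left] at this
      exact_mod_cast this
    rw [mul_assoc, choose_mul, show k + d + (k + i) = 2 * k + (d + i) by ring, pow_add, pow_mul,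
      pow_add, neg_one_sq, one_pow]
    ring
  rw [add_assoc, Finset.sum_range_add, Finset.sum_eq_zero, zero_add,
    Finset.sum_congr rfl fun i _ ↦ term_eq i, ← Finset.mul_sum, Int.alternating_sum_range_choose]
  · by_cases hd : d = 0 <;> simp [hd]
  · intro j hj
    rw [Nat.choose_eq_zero_of_lt (Finset.mem_range.1 hj), Nat.cast_zero, mul_zero]

lemma factorial_add_eq_sum_range (j k : ℕ) :
    (j + k).factorial = ∑ i ∈ Finset.range (j + 1),
      (j.factorial * j.choose i) * (k.factorial * k.choose i) := by
  have vandermonde : (j + k).choose j = ∑ i ∈ Finset.range (j + 1), j.choose i * k.choose i := by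
    rw [add_comm, Nat.add_choose_eq, Finset.Nat.sum_antidiagonal_eq_sum_range_succ
      (fun a b ↦ k.choose a * j.choose b)]
    refine Finset.sum_congr rfl fun i hi ↦ ?_
    rw [Nat.choose_symm (Finset.mem_range_succ_iff.1 hi), mul_comm]
  rw [← Nat.add_choose_mul_factorial_mul_factorial, ← Nat.choose_symm_add, vandermonde,
    Finset.sum_mul, Finset.sum_mul]
  exact Finset.sum_congr rfl fun i _ ↦ by ring

lemma integral_pow_mul_exp_neg_Ioi (k : ℕ) :
    ∫ x in Set.Ioi (0 : ℝ), x ^ k * exp (-x) = k.factorial := by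
  rw [← Gamma_nat_eq_factorial, Gamma_eq_integral (by positivity)]
  refine setIntegral_congr_fun measurableSet_Ioi fun x _ ↦ ?_
  simp only [add_sub_cancel_right, rpow_natCast, mul_comm]

/-- The Hankel matrix of the moments `μ n = n!` of the Laguerre weight, indexed by `0, …, N`. -/
def laguerreHankel (N : ℕ) : Matrix (Fin (N + 1)) (Fin (N + 1)) ℝ :=
  Matrix.of fun j k ↦ ((j + k : ℕ).factorial : ℝ)

/-- The lower triangular factor `j! C(j,i)` in the Cholesky decomposition of `laguerreHankel N`. -/
def laguerreCholesky (N : ℕ) : Matrix (Fin (N + 1)) (Fin (N + 1)) ℝ :=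
  Matrix.of fun j i ↦ ((j : ℕ).factorial : ℝ) * (j : ℕ).choose i

/-- The inverse of `laguerreCholesky N`. Its `n`-th row holds the coefficients of `(-1)ⁿ Lₙ`, the
`n`-th Laguerre polynomial normalised to have a positive leading coefficient. -/
noncomputable def laguerreCoeff (N : ℕ) : Matrix (Fin (N + 1)) (Fin (N + 1)) ℝ :=
  Matrix.of fun n j ↦ (-1 : ℝ) ^ (n + j : ℕ) * (n : ℕ).choose j / (j : ℕ).factorial

/-- The inner product of the coefficient vectors of `L_m(-x)` and `L_n(-x)`, where `L_n` is the
`n`-th Laguerre polynomial; terms with `j > n` vanish. -/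
noncomputable def laguerreKernel (m n : ℕ) : ℝ :=
  ∑ j ∈ Finset.range (m + 1), (m.choose j : ℝ) * n.choose j / (j.factorial : ℝ) ^ 2

/-- The trace of the inverse of `laguerreHankel N`, see `trace_laguerreHankel_inv`. -/
noncomputable def laguerreTrace (N : ℕ) : ℝ := ∑ n ∈ Finset.range (N + 1), laguerreKernel n n

lemma sum_fin_eq_sum_range_of_choose_factor {N n : ℕ} (hn : n ≤ N) {f : ℕ → ℝ}
    (hf : ∀ j, n.choose j = 0 → f j = 0) :
    ∑ j : Fin (N + 1), f j = ∑ j ∈ Finset.range (n + 1), f j := by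
  rw [Fin.sum_univ_eq_sum_range]
  refine (Finset.sum_subset (Finset.range_mono (by lia)) fun j _ hj ↦ hf j ?_).symm
  exact Nat.choose_eq_zero_of_lt (by simpa using hj)

lemma laguerreCoeff_mul_laguerreCholesky (N : ℕ) : laguerreCoeff N * laguerreCholesky N = 1 := by
  ext n k
  have hn : (n : ℕ) ≤ N := by lia
  rw [Matrix.mul_apply, Matrix.one_apply]
  simp only [laguerreCoeff, laguerreCholesky, Matrix.of_apply]
  rw [sum_fin_eq_sum_range_of_choose_factor hn
    (f := fun j ↦ (-1 : ℝ) ^ (n + j : ℕ) * (n : ℕ).choose j / j.factorial *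
      (j.factorial * j.choose k)) (fun j hj ↦ by simp [hj])]
  have orthogonality := congrArg (Int.cast : ℤ → ℝ)
    (sum_range_neg_one_pow_mul_choose_mul_choose n k)
  push_cast at orthogonality
  simp only [Fin.ext_iff]
  rw [← orthogonality]
  exact Finset.sum_congr rfl fun j _ ↦ by field_simp

lemma laguerreHankel_eq_mul_transpose (N : ℕ) :
    laguerreHankel N = laguerreCholesky N * (laguerreCholesky N).transpose := by
  ext j k
  have hj : (j : ℕ) ≤ N := by lia
  rw [Matrix.mul_apply]
  simp only [laguerreHankel, laguerreCholesky, Matrix.transpose_apply, Matrix.of_apply]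
  rw [factorial_add_eq_sum_range, sum_fin_eq_sum_range_of_choose_factor hj
    (f := fun i ↦ ((j : ℕ).factorial * (j : ℕ).choose i : ℝ) *
      ((k : ℕ).factorial * (k : ℕ).choose i)) (fun i hi ↦ by simp [hi])]
  push_cast
  rfl

lemma laguerreHankel_inv (N : ℕ) :
    (laguerreHankel N)⁻¹ = (laguerreCoeff N).transpose * laguerreCoeff N := by
  have mul_coeff := mul_eq_one_comm.1 (laguerreCoeff_mul_laguerreCholesky N)
  refine Matrix.inv_eq_right_inv ?_
  calc laguerreHankel N * ((laguerreCoeff N).transpose * laguerreCoeff N)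
      = laguerreCholesky N * (laguerreCoeff N * laguerreCholesky N).transpose *
          laguerreCoeff N := by
        simp only [laguerreHankel_eq_mul_transpose, Matrix.transpose_mul, Matrix.mul_assoc]
    _ = 1 := by
        rw [laguerreCoeff_mul_laguerreCholesky, Matrix.transpose_one, Matrix.mul_one, mul_coeff]

lemma laguerreCoeff_mul_transpose_apply (N : ℕ) (m n : Fin (N + 1)) :
    (laguerreCoeff N * (laguerreCoeff N).transpose) m n =
      (-1 : ℝ) ^ (m + n : ℕ) * laguerreKernel m n := by
  have hm : (m : ℕ) ≤ N := by lia
  rw [Matrix.mul_apply, laguerreKernel, Finset.mul_sum]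
  simp only [laguerreCoeff, Matrix.transpose_apply, Matrix.of_apply]
  rw [sum_fin_eq_sum_range_of_choose_factor hm
    (f := fun j ↦ ((-1 : ℝ) ^ (m + j : ℕ) * (m : ℕ).choose j / j.factorial) *
      ((-1 : ℝ) ^ (n + j : ℕ) * (n : ℕ).choose j / j.factorial)) (fun j hj ↦ by simp [hj])]
  refine Finset.sum_congr rfl fun j _ ↦ ?_
  have sign_eq : (-1 : ℝ) ^ (m + j : ℕ) * (-1) ^ (n + j : ℕ) = (-1) ^ (m + n : ℕ) := by
    rw [← pow_add, show (m + j + (n + j) : ℕ) = m + n + 2 * j by ring, pow_add, pow_mul,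
      neg_one_sq, one_pow, mul_one]
  rw [← sign_eq]
  ring

lemma posDef_laguerreHankel (N : ℕ) : (laguerreHankel N).PosDef := by
  have isUnit_cholesky : IsUnit (laguerreCholesky N) :=
    IsUnit.of_mul_eq_one_right _ (laguerreCoeff_mul_laguerreCholesky N)
  rw [laguerreHankel_eq_mul_transpose]
  refine (Matrix.posSemidef_self_mul_conjTranspose _).posDef_iff_isUnit.2 ?_
  exact isUnit_cholesky.mul ((Matrix.isUnit_transpose _).2 isUnit_cholesky)

lemma trace_laguerreHankel_inv (N : ℕ) :
    (laguerreHankel N)⁻¹.trace = laguerreTrace N := by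
  rw [laguerreHankel_inv, Matrix.trace_mul_comm, Matrix.trace, laguerreTrace,
    ← Fin.sum_univ_eq_sum_range fun n ↦ laguerreKernel n n]
  refine Finset.sum_congr rfl fun n _ ↦ ?_
  rw [Matrix.diag_apply, laguerreCoeff_mul_transpose_apply, (Even.add_self _).neg_one_pow, one_mul]

lemma trace_laguerreHankel_inv_mul_self (N : ℕ) :
    ((laguerreHankel N)⁻¹ * (laguerreHankel N)⁻¹).trace =
      ∑ m ∈ Finset.range (N + 1), ∑ n ∈ Finset.range (N + 1), laguerreKernel m n ^ 2 := by
  have gram_transpose : (laguerreCoeff N * (laguerreCoeff N).transpose).transpose =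
      laguerreCoeff N * (laguerreCoeff N).transpose := by
    rw [Matrix.transpose_mul, Matrix.transpose_transpose]
  have trace_eq : ((laguerreHankel N)⁻¹ * (laguerreHankel N)⁻¹).trace =
      ((laguerreCoeff N * (laguerreCoeff N).transpose) *
        (laguerreCoeff N * (laguerreCoeff N).transpose).transpose).trace := by
    rw [gram_transpose, laguerreHankel_inv, Matrix.mul_assoc, Matrix.trace_mul_comm]
    simp only [Matrix.mul_assoc]
  rw [trace_eq, Matrix.trace, ← Fin.sum_univ_eq_sum_range
    fun m ↦ ∑ n ∈ Finset.range (N + 1), laguerreKernel m n ^ 2]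
  refine Finset.sum_congr rfl fun m _ ↦ ?_
  rw [Matrix.diag_apply, Matrix.mul_apply,
    ← Fin.sum_univ_eq_sum_range fun n ↦ laguerreKernel m n ^ 2]
  refine Finset.sum_congr rfl fun n _ ↦ ?_
  rw [Matrix.transpose_apply, laguerreCoeff_mul_transpose_apply, ← pow_two, mul_pow, ← pow_mul,
    mul_comm (m + n : ℕ), pow_mul, neg_one_sq, one_pow, one_mul]

lemma one_le_laguerreKernel_self (n : ℕ) : 1 ≤ laguerreKernel n n := by
  refine le_trans (by simp) (Finset.single_le_sum (fun j _ ↦ ?_) (Finset.mem_range.2 n.succ_pos))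
  positivity

lemma laguerreKernel_self_pos (n : ℕ) : 0 < laguerreKernel n n :=
  one_pos.trans_le (one_le_laguerreKernel_self n)

lemma laguerreTrace_pos (N : ℕ) : 0 < laguerreTrace N :=
  Finset.sum_pos (fun n _ ↦ laguerreKernel_self_pos n) Finset.nonempty_range_add_one

lemma laguerreTrace_succ (N : ℕ) :
    laguerreTrace (N + 1) = laguerreTrace N + laguerreKernel (N + 1) (N + 1) :=
  Finset.sum_range_succ _ _

lemma strictMono_laguerreTrace : StrictMono laguerreTrace :=
  strictMono_nat_of_lt_succ fun N ↦ by
    rw [laguerreTrace_succ]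
    exact lt_add_of_pos_right _ (laguerreKernel_self_pos _)

lemma tendsto_laguerreTrace_atTop : Tendsto laguerreTrace atTop atTop := by
  refine tendsto_atTop_mono (fun N ↦ ?_) tendsto_natCast_atTop_atTop
  calc (N : ℝ) ≤ ∑ n ∈ Finset.range (N + 1), 1 := by simp
    _ ≤ laguerreTrace N := Finset.sum_le_sum fun n _ ↦ one_le_laguerreKernel_self n

end LaguerreHankel

section PoissonLocalLimit

open InformationTheory

lemma sq_sqrt_sub_one_le_klFun {t : ℝ} (ht : 0 ≤ t) : (√t - 1) ^ 2 ≤ klFun t := by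
  rcases ht.eq_or_lt with rfl | ht
  · simp [klFun_zero]
  have sq_sqrt_t := sq_sqrt ht.le
  have log_eq : log t = 2 * log √t := by rw [log_sqrt ht.le]; ring
  have log_ge := one_sub_inv_le_log_of_pos (sqrt_pos.2 ht)
  have mul_inv_eq : t * (√t)⁻¹ = √t := by rw [← div_eq_mul_inv, div_sqrt]
  rw [klFun_apply, log_eq]
  nlinarith [mul_le_mul_of_nonneg_left log_ge ht.le]

lemma tendsto_klFun_div_sq_sub_one :
    Tendsto (fun t ↦ klFun t / (t - 1) ^ 2) (𝓝[≠] 1) (𝓝 (1 / 2)) := by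
  have tendsto_slope_log : Tendsto (fun t ↦ log t / (2 * (t - 1))) (𝓝[≠] 1) (𝓝 (1 / 2)) := by
    have := (hasDerivAt_log one_ne_zero).tendsto_slope.div_const 2
    rw [inv_one] at this
    refine this.congr fun t ↦ ?_
    rw [slope_def_field, log_one, sub_zero, div_div, mul_comm]
  refine HasDerivAt.lhopital_zero_nhdsNE (f' := log) (g' := fun t ↦ 2 * (t - 1)) ?_ ?_ ?_ ?_ ?_
    tendsto_slope_log
  · exact eventually_nhdsWithin_of_eventually_nhds <|
      (eventually_ne_nhds one_ne_zero).mono fun t ht ↦ hasDerivAt_klFun ht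
  · refine Eventually.of_forall fun t ↦ ?_
    simpa using ((hasDerivAt_id' t).sub_const 1).fun_pow 2
  · exact eventually_mem_nhdsWithin.mono fun t ht ↦ mul_ne_zero two_ne_zero (sub_ne_zero.2 ht)
  · exact tendsto_nhdsWithin_of_tendsto_nhds (continuous_klFun.tendsto' 1 0 klFun_one)
  · exact tendsto_nhdsWithin_of_tendsto_nhds (Continuous.tendsto' (by fun_prop) 1 0 (by norm_num))

lemma tendsto_mul_klFun {α : Type*} {l : Filter α} {x t : α → ℝ} {c : ℝ}
    (ht : Tendsto t l (𝓝 1)) (hc : Tendsto (fun a ↦ x a * (t a - 1) ^ 2) l (𝓝 c)) :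
    Tendsto (fun a ↦ x a * klFun (t a)) l (𝓝 (c / 2)) := by
  have taylor : (fun t ↦ klFun t - (t - 1) ^ 2 / 2) =o[𝓝 1] fun t ↦ (t - 1) ^ 2 := by
    rw [← pure_sup_nhdsNE, Asymptotics.isLittleO_sup, Asymptotics.isLittleO_pure]
    refine ⟨by simp [klFun_one], ?_⟩
    refine (Asymptotics.isLittleO_iff_tendsto' (eventually_mem_nhdsWithin.mono fun t ht h ↦
      absurd h (pow_ne_zero 2 (sub_ne_zero.2 ht)))).2 ?_
    rw [← sub_self (1 / 2 : ℝ)]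
    refine (tendsto_klFun_div_sq_sub_one.sub_const _).congr' ?_
    filter_upwards [eventually_mem_nhdsWithin] with t ht
    have : t - 1 ≠ 0 := sub_ne_zero.2 ht
    field_simp
  have remainder_isLittleO_one :
      (fun a ↦ x a * (klFun (t a) - (t a - 1) ^ 2 / 2)) =o[l] fun _ ↦ (1 : ℝ) :=
    ((Asymptotics.isBigO_refl x l).mul_isLittleO (taylor.comp_tendsto ht)).trans_isBigO
      (hc.isBigO_one ℝ)
  have := ((Asymptotics.isLittleO_one_iff ℝ).1 remainder_isLittleO_one).add (hc.div_const 2)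
  rw [zero_add] at this
  exact this.congr fun a ↦ by ring

lemma div_exp_one_pow_le_factorial (j : ℕ) : ((j : ℝ) / exp 1) ^ j ≤ j.factorial := by
  have := pow_div_factorial_le_exp (j : ℝ) j.cast_nonneg j
  rw [div_le_iff₀ (by positivity)] at this
  rwa [div_pow, ← exp_nat_mul, mul_one, div_le_iff₀' (exp_pos _)]

/-- The Poisson weight `e⁻ˣ xʲ / j!`, with the rate `x` a real number. -/
noncomputable def poissonWeight (x : ℝ) (j : ℕ) : ℝ := exp (-x) * x ^ j / j.factorial

section FixedRate

variable {x : ℝ}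

lemma poissonWeight_nonneg (hx : 0 ≤ x) (j : ℕ) : 0 ≤ poissonWeight x j := by
  unfold poissonWeight
  positivity

lemma poissonWeight_eq_mul_exp_klFun (hx : 0 < x) (j : ℕ) :
    poissonWeight x j = (j / exp 1) ^ j / j.factorial * exp (-(x * klFun (j / x))) := by
  rcases eq_or_ne j 0 with rfl | hj
  · simp [poissonWeight, klFun_zero]
  have exponent_eq : -(x * klFun (j / x)) = -x + (j * log (x / j) + j) := by
    rw [klFun_apply, ← inv_div x, log_inv]
    field_simp
    ring
  rw [exponent_eq, exp_add, exp_add, mul_comm (j : ℝ) (log _), exp_mul, exp_log (by positivity),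
    rpow_natCast, poissonWeight, div_pow, div_pow, ← exp_nat_mul, mul_one]
  field_simp

lemma exp_neg_mul_klFun_le (hx : 0 < x) (j : ℕ) :
    exp (-(x * klFun (j / x))) ≤ exp (-(√j - √x) ^ 2) := by
  have le_klFun := mul_le_mul_of_nonneg_left
    (sq_sqrt_sub_one_le_klFun (t := j / x) (by positivity)) hx.le
  have rescale : x * (√(j / x) - 1) ^ 2 = (√j - √x) ^ 2 := by
    nth_rw 1 [← sq_sqrt hx.le]
    rw [sqrt_div j.cast_nonneg, ← mul_pow]
    congr 1
    field_simp
  rw [exp_le_exp]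
  linarith

lemma poissonWeight_le_exp_neg_sq (hx : 0 < x) (j : ℕ) :
    poissonWeight x j ≤ exp (-(√j - √x) ^ 2) := by
  rw [poissonWeight_eq_mul_exp_klFun hx]
  refine (mul_le_of_le_one_left (exp_nonneg _) ?_).trans (exp_neg_mul_klFun_le hx j)
  exact div_le_one_of_le₀ (div_exp_one_pow_le_factorial j) (Nat.cast_nonneg _)

lemma sqrt_natCast_mul_poissonWeight_le_exp_neg_sq (hx : 0 < x) (j : ℕ) :
    √j * poissonWeight x j ≤ exp (-(√j - √x) ^ 2) := by
  have sqrt_mul_le : √j * (j / exp 1) ^ j ≤ j.factorial := by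
    refine le_trans ?_ (Stirling.le_factorial_stirling j)
    gcongr
    nlinarith [pi_gt_three, j.cast_nonneg (α := ℝ)]
  rw [poissonWeight_eq_mul_exp_klFun hx, ← mul_assoc, ← mul_div_assoc]
  refine (mul_le_of_le_one_left (exp_nonneg _) ?_).trans (exp_neg_mul_klFun_le hx j)
  exact div_le_one_of_le₀ sqrt_mul_le (Nat.cast_nonneg _)

lemma sqrt_mul_poissonWeight_le (hx : 0 < x) (j : ℕ) :
    √x * poissonWeight x j ≤ 2 * exp (-(√j - √x) ^ 2 / 2) := by
  set d := √j - √x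
  have weight_nonneg := poissonWeight_nonneg hx.le j
  have sqrt_le : √x ≤ |d| + √j := by linarith [neg_abs_le d]
  have abs_add_one_le : |d| + 1 ≤ 2 * exp (d ^ 2 / 2) := by
    nlinarith [add_one_le_exp (d ^ 2 / 2), sq_abs d, sq_nonneg (|d| - 1)]
  calc √x * poissonWeight x j
      ≤ |d| * poissonWeight x j + √j * poissonWeight x j := by
        rw [← add_mul]
        gcongr
    _ ≤ |d| * exp (-d ^ 2) + exp (-d ^ 2) :=
        add_le_add (by gcongr; exact poissonWeight_le_exp_neg_sq hx j)
          (sqrt_natCast_mul_poissonWeight_le_exp_neg_sq hx j)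
    _ = (|d| + 1) * exp (-d ^ 2) := by ring
    _ ≤ 2 * exp (d ^ 2 / 2) * exp (-d ^ 2) := by gcongr
    _ = 2 * exp (-d ^ 2 / 2) := by
        rw [mul_assoc, ← exp_add]
        ring_nf

lemma abs_le_two_mul_sq_sqrt_floor_sub_sqrt_add_two {s : ℝ} (hx : 1 ≤ x) (hs : 0 ≤ x + s * √x) :
    |s| ≤ 2 * (√⌊x + s * √x⌋₊ - √x) ^ 2 + 2 := by
  set j := ⌊x + s * √x⌋₊
  set d := √j - √x
  have one_le_sqrt_x : 1 ≤ √x := one_le_sqrt.2 hx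
  have floor_le : (j : ℝ) ≤ x + s * √x := Nat.floor_le hs
  have lt_floor : x + s * √x < j + 1 := Nat.lt_floor_add_one _
  have floor_sub : (j : ℝ) - x = d * (2 * √x + d) := by
    nlinarith [sq_sqrt (zero_le_one.trans hx), sq_sqrt (j.cast_nonneg (α := ℝ))]
  have abs_floor_sub_le : |(j : ℝ) - x| ≤ (d ^ 2 + 1) * √x + d ^ 2 := by
    rw [floor_sub, abs_le]
    constructor <;> nlinarith [sq_nonneg (d - 1), sq_nonneg (d + 1)]
  have abs_mul_sqrt_le : |s| * √x ≤ |(j : ℝ) - x| + 1 := by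
    nth_rw 1 [← abs_of_nonneg (sqrt_nonneg x)]
    rw [← abs_mul, abs_le]
    constructor <;> linarith [neg_abs_le ((j : ℝ) - x), le_abs_self ((j : ℝ) - x)]
  refine le_of_mul_le_mul_right (a := √x) ?_ (by linarith)
  nlinarith [sq_nonneg d]

lemma sqrt_mul_poissonWeight_floor_le {s : ℝ} (hx : 1 ≤ x) (hs : 0 ≤ x + s * √x) :
    √x * poissonWeight x ⌊x + s * √x⌋₊ ≤ 2 * exp (1 / 2) * exp (-(1 / 4) * |s|) := by
  refine (sqrt_mul_poissonWeight_le (zero_lt_one.trans_le hx) _).trans ?_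
  rw [mul_assoc, ← exp_add]
  gcongr
  linarith [abs_le_two_mul_sq_sqrt_floor_sub_sqrt_add_two hx hs]

lemma eventually_add_mul_sqrt_nonneg (s : ℝ) : ∀ᶠ x in atTop, 0 ≤ x + s * √x := by
  filter_upwards [tendsto_sqrt_atTop.eventually_ge_atTop (-s), eventually_ge_atTop 0] with x hs hx
  nlinarith [sq_sqrt hx, sqrt_nonneg x]

lemma tendsto_floor_add_mul_sqrt_sub_div_sqrt (s : ℝ) :
    Tendsto (fun x : ℝ ↦ (⌊x + s * √x⌋₊ - x) / √x) atTop (𝓝 s) := by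
  have rounding_error : Tendsto (fun x : ℝ ↦ (⌊x + s * √x⌋₊ - (x + s * √x)) * (√x)⁻¹) atTop
      (𝓝 0) := by
    refine bdd_le_mul_tendsto_zero (b := -1) (B := 1) ?_ ?_
      (tendsto_inv_atTop_zero.comp tendsto_sqrt_atTop)
    · exact Eventually.of_forall fun x ↦ by linarith [Nat.lt_floor_add_one (x + s * √x)]
    · filter_upwards [eventually_add_mul_sqrt_nonneg s] with x hs
      linarith [Nat.floor_le hs]
  have := rounding_error.add_const s
  rw [zero_add] at this
  refine this.congr' ?_
  filter_upwards [eventually_gt_atTop 0] with x hx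
  have : 0 < √x := sqrt_pos.2 hx
  field_simp
  ring

lemma tendsto_floor_add_mul_sqrt_div (s : ℝ) :
    Tendsto (fun x : ℝ ↦ (⌊x + s * √x⌋₊ : ℝ) / x) atTop (𝓝 1) := by
  have := ((tendsto_floor_add_mul_sqrt_sub_div_sqrt s).mul
    (tendsto_inv_atTop_zero.comp tendsto_sqrt_atTop)).const_add 1
  rw [mul_zero, add_zero] at this
  refine this.congr' ?_
  filter_upwards [eventually_gt_atTop 0] with x hx
  have : 0 < √x := sqrt_pos.2 hx
  rw [Function.comp_apply, ← div_eq_mul_inv, div_div, mul_self_sqrt hx.le]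
  field_simp
  ring

lemma tendsto_floor_add_mul_sqrt_atTop (s : ℝ) :
    Tendsto (fun x : ℝ ↦ ⌊x + s * √x⌋₊) atTop atTop := by
  refine tendsto_nat_floor_atTop.comp ?_
  have := tendsto_sqrt_atTop.atTop_mul_atTop₀ (tendsto_atTop_add_const_right _ s tendsto_sqrt_atTop)
  refine this.congr' ?_
  filter_upwards [eventually_ge_atTop 0] with x hx
  rw [mul_add, mul_self_sqrt hx, mul_comm]

lemma tendsto_sqrt_mul_poissonWeight (s : ℝ) :
    Tendsto (fun x ↦ √x * poissonWeight x ⌊x + s * √x⌋₊) atTop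
      (𝓝 (ProbabilityTheory.gaussianPDFReal 0 1 s)) := by
  have ratio := tendsto_floor_add_mul_sqrt_div s
  have deviation : Tendsto (fun x : ℝ ↦ x * ((⌊x + s * √x⌋₊ : ℝ) / x - 1) ^ 2) atTop
      (𝓝 (s ^ 2)) := by
    refine ((tendsto_floor_add_mul_sqrt_sub_div_sqrt s).pow 2).congr' ?_
    filter_upwards [eventually_gt_atTop 0] with x hx
    rw [div_pow, sq_sqrt hx.le]
    field_simp
  have exponential := (tendsto_mul_klFun ratio deviation).neg.rexp
  have stirling := Stirling.tendsto_stirlingSeq_sqrt_pi.comp (tendsto_floor_add_mul_sqrt_atTop s)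
  have limit := (((ratio.const_mul 2).sqrt.inv₀ (by positivity)).mul
    (stirling.inv₀ (by positivity))).mul exponential
  have limit_eq : (√(2 * 1))⁻¹ * (√π)⁻¹ * exp (-(s ^ 2 / 2)) =
      ProbabilityTheory.gaussianPDFReal 0 1 s := by
    rw [ProbabilityTheory.gaussianPDFReal, sub_zero, NNReal.coe_one, mul_one, mul_one, neg_div,
      sqrt_mul zero_le_two, mul_inv]
  rw [← limit_eq]
  refine limit.congr' ?_
  filter_upwards [eventually_gt_atTop 0,
    (tendsto_floor_add_mul_sqrt_atTop s).eventually_gt_atTop 0] with x hx hj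
  rw [poissonWeight_eq_mul_exp_klFun hx, Function.comp_apply, Stirling.stirlingSeq, ← mul_div_assoc,
    sqrt_div (by positivity), ← mul_assoc]
  field_simp

lemma integrable_exp_neg_mul_abs {b : ℝ} (hb : 0 < b) :
    Integrable fun s : ℝ ↦ exp (-b * |s|) := by
  rw [← integrableOn_univ, ← Set.Iic_union_Ioi (a := (0 : ℝ))]
  refine IntegrableOn.union ?_ ?_
  · refine (integrableOn_exp_mul_Iic hb 0).congr_fun (fun s hs ↦ ?_) measurableSet_Iic
    simp only [abs_of_nonpos (Set.mem_Iic.1 hs), neg_mul_neg]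
  · refine (integrableOn_exp_mul_Ioi (neg_lt_zero.2 hb) 0).congr_fun (fun s hs ↦ ?_)
      measurableSet_Ioi
    simp only [abs_of_pos (Set.mem_Ioi.1 hs)]

lemma integral_indicator_Ici_comp_natFloor {g : ℕ → ℝ} (hg : ∀ j, 0 ≤ g j) :
    ∫ y : ℝ, Set.indicator (Set.Ici 0) (fun y ↦ g ⌊y⌋₊) y = ∑' j, g j := by
  have floor_eq {n : ℕ} {y : ℝ} (hy : y ∈ Set.Ico (n : ℝ) (n + 1)) : ⌊y⌋₊ = n :=
    (Nat.floor_eq_iff (n.cast_nonneg.trans hy.1)).2 hy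
  have Ici_eq_iUnion : Set.Ici (0 : ℝ) = ⋃ n : ℕ, Set.Ico (n : ℝ) (n + 1) := by
    ext y
    simp only [Set.mem_Ici, Set.mem_iUnion]
    exact ⟨fun hy ↦ ⟨⌊y⌋₊, Nat.floor_le hy, Nat.lt_floor_add_one y⟩,
      fun ⟨n, hn⟩ ↦ n.cast_nonneg.trans hn.1⟩
  have disjoint_Ico : Pairwise (Function.onFun Disjoint fun n : ℕ ↦ Set.Ico (n : ℝ) (n + 1)) :=
    fun m n hmn ↦ Set.disjoint_left.2 fun y hm hn ↦ hmn ((floor_eq hm).symm.trans (floor_eq hn))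
  have measurable_comp : Measurable fun y : ℝ ↦ g ⌊y⌋₊ :=
    (measurable_from_nat (f := g)).comp Nat.measurable_floor
  have lintegral_Ico (n : ℕ) :
      ∫⁻ y in Set.Ico (n : ℝ) (n + 1), ENNReal.ofReal (g ⌊y⌋₊) = ENNReal.ofReal (g n) := by
    rw [setLIntegral_congr_fun measurableSet_Ico (g := fun _ ↦ ENNReal.ofReal (g n))
      fun y hy ↦ by simp only [floor_eq hy]]
    simp
  rw [integral_indicator measurableSet_Ici, integral_eq_lintegral_of_nonneg_ae
    (Eventually.of_forall fun y ↦ hg _) measurable_comp.aestronglyMeasurable, Ici_eq_iUnion,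
    lintegral_iUnion (fun _ ↦ measurableSet_Ico) disjoint_Ico]
  simp only [lintegral_Ico, ENNReal.tsum_toReal_eq fun _ ↦ ENNReal.ofReal_ne_top,
    ENNReal.toReal_ofReal (hg _)]

lemma integral_indicator_Ici_comp_natFloor_affine {g : ℕ → ℝ} (hg : ∀ j, 0 ≤ g j) (c : ℝ) {r : ℝ}
    (hr : 0 < r) :
    ∫ s : ℝ, Set.indicator (Set.Ici 0) (fun y ↦ g ⌊y⌋₊) (c + s * r) = r⁻¹ * ∑' j, g j := by
  set ψ : ℝ → ℝ := Set.indicator (Set.Ici 0) fun y ↦ g ⌊y⌋₊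
  rw [Measure.integral_comp_mul_right (fun z ↦ ψ (c + z)), integral_add_left_eq_self ψ c,
    smul_eq_mul, abs_of_pos (inv_pos.2 hr), integral_indicator_Ici_comp_natFloor hg]

lemma norm_indicator_poissonWeight_pow_mul_le {w : ℕ → ℝ} (hw_nonneg : ∀ j, 0 ≤ w j)
    (hw_le_one : ∀ j, w j ≤ 1) (hx : 1 ≤ x) (k : ℕ) (s : ℝ) :
    ‖Set.indicator (Set.Ici 0) (fun y ↦ (√x * poissonWeight x ⌊y⌋₊) ^ k * w ⌊y⌋₊) (x + s * √x)‖ ≤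
      (2 * exp (1 / 2) * exp (-(1 / 4) * |s|)) ^ k := by
  by_cases hs : x + s * √x ∈ Set.Ici 0
  · have weight_nonneg : 0 ≤ √x * poissonWeight x ⌊x + s * √x⌋₊ :=
      mul_nonneg (sqrt_nonneg x) (poissonWeight_nonneg (zero_le_one.trans hx) _)
    rw [Set.indicator_of_mem hs, norm_eq_abs,
      abs_of_nonneg (mul_nonneg (pow_nonneg weight_nonneg _) (hw_nonneg _))]
    exact (mul_le_of_le_one_right (pow_nonneg weight_nonneg _) (hw_le_one _)).trans
      (pow_le_pow_left₀ weight_nonneg (sqrt_mul_poissonWeight_floor_le hx hs) _)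
  · rw [Set.indicator_of_notMem hs, norm_zero]
    positivity

end FixedRate

section VaryingRate

variable {α : Type*} {l : Filter α} [l.IsCountablyGenerated] {x : α → ℝ} {w : α → ℕ → ℝ} {W : ℝ}

lemma tendsto_integral_indicator_poissonWeight_pow_mul (hx : Tendsto x l atTop)
    (hw_nonneg : ∀ a j, 0 ≤ w a j) (hw_le_one : ∀ a j, w a j ≤ 1)
    (hW : ∀ s : ℝ, Tendsto (fun a ↦ w a ⌊x a + s * √(x a)⌋₊) l (𝓝 W)) {k : ℕ} (hk : k ≠ 0) :
    Tendsto (fun a ↦ ∫ s : ℝ, Set.indicator (Set.Ici 0)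
        (fun y ↦ (√(x a) * poissonWeight (x a) ⌊y⌋₊) ^ k * w a ⌊y⌋₊) (x a + s * √(x a))) l
      (𝓝 ((∫ s, ProbabilityTheory.gaussianPDFReal 0 1 s ^ k) * W)) := by
  rw [← integral_mul_const]
  refine tendsto_integral_filter_of_dominated_convergence
    (fun s ↦ (2 * exp (1 / 2) * exp (-(1 / 4) * |s|)) ^ k) ?_ ?_ ?_ ?_
  · refine Eventually.of_forall fun a ↦ Measurable.aestronglyMeasurable ?_
    have : Measurable fun y : ℝ ↦ (√(x a) * poissonWeight (x a) ⌊y⌋₊) ^ k * w a ⌊y⌋₊ :=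
      (measurable_from_nat (f := fun j ↦ (√(x a) * poissonWeight (x a) j) ^ k * w a j)).comp
        Nat.measurable_floor
    exact (this.indicator measurableSet_Ici).comp (by fun_prop)
  · filter_upwards [hx.eventually_ge_atTop 1] with a ha
    exact Eventually.of_forall
      (norm_indicator_poissonWeight_pow_mul_le (hw_nonneg a) (hw_le_one a) ha k)
  · simp only [mul_pow, ← exp_nat_mul, ← mul_assoc, mul_neg]
    exact (integrable_exp_neg_mul_abs (by positivity)).const_mul _
  · refine Eventually.of_forall fun s ↦ ?_
    refine ((((tendsto_sqrt_mul_poissonWeight s).comp hx).pow k).mul (hW s)).congr' ?_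
    filter_upwards [hx.eventually (eventually_add_mul_sqrt_nonneg s)] with a hs
    rw [Set.indicator_of_mem (Set.mem_Ici.2 hs), Function.comp_apply]

lemma tendsto_sqrt_pow_mul_tsum_poissonWeight_pow_mul (hx : Tendsto x l atTop)
    (hw_nonneg : ∀ a j, 0 ≤ w a j) (hw_le_one : ∀ a j, w a j ≤ 1)
    (hW : ∀ s : ℝ, Tendsto (fun a ↦ w a ⌊x a + s * √(x a)⌋₊) l (𝓝 W)) (k : ℕ) :
    Tendsto (fun a ↦ √(x a) ^ k * ∑' j, poissonWeight (x a) j ^ (k + 1) * w a j) l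
      (𝓝 ((∫ s, ProbabilityTheory.gaussianPDFReal 0 1 s ^ (k + 1)) * W)) := by
  refine (tendsto_integral_indicator_poissonWeight_pow_mul hx hw_nonneg hw_le_one hW
    k.succ_ne_zero).congr' ?_
  filter_upwards [hx.eventually_gt_atTop 0] with a ha
  have sqrt_pos_x := sqrt_pos.2 ha
  have term_nonneg (j : ℕ) : 0 ≤ (√(x a) * poissonWeight (x a) j) ^ (k + 1) * w a j :=
    mul_nonneg (pow_nonneg (mul_nonneg sqrt_pos_x.le (poissonWeight_nonneg ha.le j)) _)
      (hw_nonneg a j)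
  rw [integral_indicator_Ici_comp_natFloor_affine term_nonneg (x a) sqrt_pos_x]
  simp only [mul_pow, mul_assoc, tsum_mul_left]
  rw [pow_succ' (√(x a)), mul_assoc, inv_mul_cancel_left₀ sqrt_pos_x.ne']

end VaryingRate

lemma integral_gaussianPDFReal_pow_four :
    ∫ s, ProbabilityTheory.gaussianPDFReal 0 1 s ^ 4 = 1 / (4 * π * √(2 * π)) := by
  have integrand_eq (s : ℝ) : ProbabilityTheory.gaussianPDFReal 0 1 s ^ 4 =
      ((2 * π) ^ 2)⁻¹ * exp (-2 * s ^ 2) := by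
    rw [ProbabilityTheory.gaussianPDFReal, sub_zero, NNReal.coe_one, mul_one, mul_one, mul_pow,
      ← exp_nat_mul, inv_pow, show √(2 * π) ^ 4 = (√(2 * π) ^ 2) ^ 2 by ring,
      sq_sqrt (by positivity)]
    ring_nf
  have sqrt_eq : √(π / 2) = π / √(2 * π) := by
    rw [eq_div_iff (by positivity), ← sqrt_mul (by positivity),
      show π / 2 * (2 * π) = π ^ 2 by ring, sqrt_sq pi_nonneg]
  simp only [integrand_eq, integral_const_mul, integral_gaussian, sqrt_eq]
  field_simp
  norm_num

end PoissonLocalLimit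

/-- The probability `n(n-1)⋯(n-j+1) / nʲ` that `j` independent uniform samples from `n` values are
pairwise distinct; it measures the error in `n.choose j ≈ nʲ / j!`. -/
noncomputable def descFactorialRatio (n j : ℕ) : ℝ := (n.descFactorial j : ℝ) / (n : ℝ) ^ j

section DescFactorialRatio

lemma descFactorialRatio_nonneg (n j : ℕ) : 0 ≤ descFactorialRatio n j := by
  unfold descFactorialRatio
  positivity

lemma descFactorialRatio_le_one (n j : ℕ) : descFactorialRatio n j ≤ 1 :=
  div_le_one_of_le₀ (mod_cast Nat.descFactorial_le_pow n j) (by positivity)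

lemma descFactorialRatio_eq_zero_of_lt {n j : ℕ} (h : n < j) : descFactorialRatio n j = 0 := by
  rw [descFactorialRatio, Nat.descFactorial_of_lt h, Nat.cast_zero, zero_div]

lemma descFactorialRatio_succ {n j : ℕ} (hj : j < n) :
    descFactorialRatio n (j + 1) = (1 - j / n) * descFactorialRatio n j := by
  have : (0 : ℝ) < n := mod_cast j.zero_le.trans_lt hj
  rw [descFactorialRatio, descFactorialRatio, Nat.descFactorial_succ, pow_succ, Nat.cast_mul,
    Nat.cast_sub hj.le]
  field_simp

lemma choose_eq_pow_div_factorial_mul_descFactorialRatio {n : ℕ} (hn : n ≠ 0) (j : ℕ) :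
    (n.choose j : ℝ) = (n : ℝ) ^ j / j.factorial * descFactorialRatio n j := by
  have : (n : ℝ) ≠ 0 := mod_cast hn
  rw [descFactorialRatio, Nat.descFactorial_eq_factorial_mul_choose, Nat.cast_mul]
  field_simp

lemma descFactorialRatio_le_exp {n j : ℕ} (hj : j ≤ n) :
    descFactorialRatio n j ≤ exp (-(j * (j - 1) / (2 * n))) := by
  induction j with
  | zero => simp [descFactorialRatio]
  | succ k ih =>
    have hn : (0 : ℝ) < n := mod_cast k.zero_le.trans_lt hj
    calc descFactorialRatio n (k + 1)
        = (1 - k / n) * descFactorialRatio n k := descFactorialRatio_succ hj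
      _ ≤ exp (-(k / n)) * exp (-(k * (k - 1) / (2 * n))) :=
          mul_le_mul (one_sub_le_exp_neg _) (ih (by lia)) (descFactorialRatio_nonneg n k)
            (exp_nonneg _)
      _ = exp (-((k + 1 : ℕ) * ((k + 1 : ℕ) - 1) / (2 * n))) := by
          rw [← exp_add]
          congr 1
          push_cast
          field_simp
          ring

lemma exp_neg_div_one_sub_le_one_sub {t : ℝ} (ht : t < 1) : exp (-(t / (1 - t))) ≤ 1 - t := by
  have h : 0 < 1 - t := sub_pos.2 ht
  rw [← le_log_iff_exp_le h]
  refine le_trans (le_of_eq ?_) (one_sub_inv_le_log_of_pos h)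
  field_simp
  ring

lemma exp_le_descFactorialRatio {n J k : ℕ} (hk : k ≤ J) (hJ : J < n) :
    exp (-(k * (k - 1) / (2 * (n - J)))) ≤ descFactorialRatio n k := by
  induction k with
  | zero => simp [descFactorialRatio]
  | succ k ih =>
    have hJn : (0 : ℝ) < n - J := sub_pos.2 (mod_cast hJ)
    have hkJ : (k : ℝ) ≤ J := mod_cast k.le_succ.trans hk
    have hn : (0 : ℝ) < n := mod_cast J.zero_le.trans_lt hJ
    have factor_ge : exp (-(k / (n - J))) ≤ 1 - (k : ℝ) / n := by
      refine le_trans ?_ (exp_neg_div_one_sub_le_one_sub ((div_lt_one hn).2 (by linarith)))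
      rw [one_sub_div hn.ne', div_div_div_cancel_right₀ hn.ne']
      gcongr
    calc exp (-((k + 1 : ℕ) * ((k + 1 : ℕ) - 1) / (2 * (n - J))))
        = exp (-(k / (n - J))) * exp (-(k * (k - 1) / (2 * (n - J)))) := by
          rw [← exp_add]
          congr 1
          push_cast
          field_simp
          ring
      _ ≤ (1 - k / n) * descFactorialRatio n k :=
          mul_le_mul factor_ge (ih (by lia)) (exp_nonneg _) ((exp_nonneg _).trans factor_ge)
      _ = descFactorialRatio n (k + 1) := (descFactorialRatio_succ (by lia)).symm

lemma tendsto_descFactorialRatio {α : Type*} {l : Filter α} {n j : α → ℕ} {c : ℝ}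
    (hn : Tendsto n l atTop) (hj : Tendsto (fun a ↦ (j a : ℝ) / √(n a)) l (𝓝 c)) :
    Tendsto (fun a ↦ descFactorialRatio (n a) (j a)) l (𝓝 (exp (-(c ^ 2 / 2)))) := by
  have n_pos : ∀ᶠ a in l, (0 : ℝ) < n a :=
    (hn.eventually_gt_atTop 0).mono fun a ha ↦ mod_cast ha
  have inv_sqrt : Tendsto (fun a ↦ (√(n a : ℝ))⁻¹) l (𝓝 0) :=
    tendsto_inv_atTop_zero.comp (tendsto_sqrt_atTop.comp (tendsto_natCast_atTop_atTop.comp hn))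
  have ratio : Tendsto (fun a ↦ (j a : ℝ) / n a) l (𝓝 0) := by
    have := hj.mul inv_sqrt
    rw [mul_zero] at this
    refine this.congr fun a ↦ ?_
    rw [← div_eq_mul_inv, div_div, mul_self_sqrt (Nat.cast_nonneg _)]
  have exponent : Tendsto (fun a ↦ (j a : ℝ) * (j a - 1) / (2 * n a)) l (𝓝 (c ^ 2 / 2)) := by
    have := ((hj.pow 2).sub ratio).div_const 2
    rw [sub_zero] at this
    refine this.congr' ?_
    filter_upwards [n_pos] with a ha
    rw [div_pow, sq_sqrt ha.le]
    field_simp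
  have lower_exponent :
      Tendsto (fun a ↦ (j a : ℝ) * (j a - 1) / (2 * (n a - j a))) l (𝓝 (c ^ 2 / 2)) := by
    have := exponent.div (ratio.const_sub 1) (by norm_num)
    rw [sub_zero, div_one] at this
    refine this.congr' ?_
    filter_upwards [n_pos] with a ha
    have denominator : (n a : ℝ) * (1 - j a / n a) = n a - j a := by field_simp
    rw [Pi.div_apply, div_div, mul_assoc, denominator]
  have j_lt_n : ∀ᶠ a in l, j a < n a := by
    filter_upwards [n_pos, ratio.eventually_lt_const one_pos] with a ha hlt
    exact_mod_cast (div_lt_one ha).1 hlt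
  refine tendsto_of_tendsto_of_tendsto_of_le_of_le' lower_exponent.neg.rexp exponent.neg.rexp ?_ ?_
  · exact j_lt_n.mono fun a ha ↦ exp_le_descFactorialRatio le_rfl ha
  · exact j_lt_n.mono fun a ha ↦ descFactorialRatio_le_exp ha.le

end DescFactorialRatio

section KernelAsymptotics

lemma exp_neg_mul_laguerreKernel {m n : ℕ} (hm : m ≠ 0) (hn : n ≠ 0) :
    exp (-(4 * (√√m * √√n))) * laguerreKernel m n =
      ∑' j, poissonWeight (√√m * √√n) j ^ (3 + 1) *
        (descFactorialRatio m j * descFactorialRatio n j) := by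
  rw [laguerreKernel, Finset.mul_sum, tsum_eq_sum (s := Finset.range (m + 1)) fun j hj ↦ by
    rw [descFactorialRatio_eq_zero_of_lt (by simpa using hj), zero_mul, mul_zero]]
  refine Finset.sum_congr rfl fun j _ ↦ ?_
  have pow_four_sqrt_sqrt (k : ℕ) : √√(k : ℝ) ^ 4 = k := by
    rw [show 4 = 2 * 2 by rfl, pow_mul, sq_sqrt (sqrt_nonneg _), sq_sqrt k.cast_nonneg]
  have pow_eq : ((√√m * √√n) ^ j) ^ 4 = (m : ℝ) ^ j * (n : ℝ) ^ j := by
    rw [pow_right_comm, mul_pow, pow_four_sqrt_sqrt, pow_four_sqrt_sqrt, mul_pow]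
  rw [poissonWeight, div_pow, mul_pow, pow_eq, ← exp_nat_mul,
    choose_eq_pow_div_factorial_mul_descFactorialRatio hm,
    choose_eq_pow_div_factorial_mul_descFactorialRatio hn, ← mul_neg]
  push_cast
  field_simp

lemma tendsto_sqrt_natCast : Tendsto (fun n : ℕ ↦ √(n : ℝ)) atTop atTop :=
  tendsto_sqrt_atTop.comp tendsto_natCast_atTop_atTop

lemma tendsto_sqrt_sqrt_natCast : Tendsto (fun n : ℕ ↦ √√(n : ℝ)) atTop atTop :=
  tendsto_sqrt_atTop.comp tendsto_sqrt_natCast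

lemma tendsto_div_one_of_tendsto_sub_zero {α : Type*} {l : Filter α} {u v : α → ℝ}
    (hu : Tendsto u l atTop) (h : Tendsto (fun a ↦ u a - v a) l (𝓝 0)) :
    Tendsto (fun a ↦ v a / u a) l (𝓝 1) := by
  have := (h.div_atTop hu).const_sub 1
  rw [sub_zero] at this
  refine this.congr' ?_
  filter_upwards [hu.eventually_gt_atTop 0] with a ha
  field_simp
  ring

variable {α : Type*} {l : Filter α} {m n : α → ℕ}

lemma tendsto_floor_div_sqrt (hm : Tendsto m l atTop) (hn : Tendsto n l atTop)
    (hmn : Tendsto (fun a ↦ √√(m a) - √√(n a)) l (𝓝 0)) (s : ℝ) :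
    Tendsto (fun a ↦ (⌊√√(m a) * √√(n a) + s * √(√√(m a) * √√(n a))⌋₊ : ℝ) / √(m a)) l
      (𝓝 1) := by
  have hm' := tendsto_sqrt_sqrt_natCast.comp hm
  have hn' := tendsto_sqrt_sqrt_natCast.comp hn
  have floor_div := (tendsto_floor_add_mul_sqrt_div s).comp (hm'.atTop_mul_atTop₀ hn')
  have := floor_div.mul (tendsto_div_one_of_tendsto_sub_zero hm' hmn)
  rw [one_mul] at this
  refine this.congr' ?_
  filter_upwards [hm'.eventually_gt_atTop 0, hn'.eventually_gt_atTop 0] with a hma hna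
  simp only [Function.comp_apply] at hma hna ⊢
  have sqrt_eq : √(m a : ℝ) = √√(m a) * √√(m a) := (mul_self_sqrt (sqrt_nonneg _)).symm
  rw [div_mul_div_comm, mul_right_comm, mul_div_mul_right _ _ hna.ne', ← sqrt_eq]

variable [l.IsCountablyGenerated]

lemma tendsto_mul_laguerreKernel (hm : Tendsto m l atTop) (hn : Tendsto n l atTop)
    (hmn : Tendsto (fun a ↦ √√(m a) - √√(n a)) l (𝓝 0)) :
    Tendsto (fun a ↦ √(√√(m a) * √√(n a)) ^ 3 *
        (exp (-(4 * (√√(m a) * √√(n a)))) * laguerreKernel (m a) (n a))) l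
      (𝓝 (1 / (4 * π * √(2 * π)) * exp (-1))) := by
  have hx := (tendsto_sqrt_sqrt_natCast.comp hm).atTop_mul_atTop₀
    (tendsto_sqrt_sqrt_natCast.comp hn)
  have hnm : Tendsto (fun a ↦ √√(n a) - √√(m a)) l (𝓝 0) := by
    simpa only [neg_sub, neg_zero] using hmn.neg
  have weight_tendsto (s : ℝ) := (tendsto_descFactorialRatio hm
    (tendsto_floor_div_sqrt hm hn hmn s)).mul (tendsto_descFactorialRatio hn
      ((tendsto_floor_div_sqrt hn hm hnm s).congr fun a ↦ by rw [mul_comm √√(n a : ℝ)]))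
  rw [show exp (-1) = exp (-(1 ^ 2 / 2)) * exp (-(1 ^ 2 / 2)) by rw [← exp_add]; norm_num,
    ← integral_gaussianPDFReal_pow_four]
  refine (tendsto_sqrt_pow_mul_tsum_poissonWeight_pow_mul hx
    (w := fun a j ↦ descFactorialRatio (m a) j * descFactorialRatio (n a) j)
    (fun a j ↦ mul_nonneg (descFactorialRatio_nonneg _ _) (descFactorialRatio_nonneg _ _))
    (fun a j ↦ mul_le_one₀ (descFactorialRatio_le_one _ _) (descFactorialRatio_nonneg _ _)
      (descFactorialRatio_le_one _ _)) weight_tendsto 3).congr' ?_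
  filter_upwards [hm.eventually_ne_atTop 0, hn.eventually_ne_atTop 0] with a hma hna
  rw [exp_neg_mul_laguerreKernel hma hna]
  rfl

lemma tendsto_mul_laguerreKernel_self :
    Tendsto (fun n : ℕ ↦ √√(n : ℝ) ^ 3 * (exp (-(4 * √n)) * laguerreKernel n n)) atTop
      (𝓝 (1 / (4 * π * √(2 * π)) * exp (-1))) := by
  refine (tendsto_mul_laguerreKernel tendsto_id tendsto_id (by simp)).congr fun n ↦ ?_
  rw [id, mul_self_sqrt (sqrt_nonneg _)]

lemma tendsto_sq_laguerreKernel_div (hm : Tendsto m l atTop) (hn : Tendsto n l atTop)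
    (hmn : Tendsto (fun a ↦ √√(m a) - √√(n a)) l (𝓝 0)) :
    Tendsto (fun a ↦ laguerreKernel (m a) (n a) ^ 2 /
        (laguerreKernel (m a) (m a) * laguerreKernel (n a) (n a))) l (𝓝 1) := by
  have mixed := tendsto_mul_laguerreKernel hm hn hmn
  have diagonal := tendsto_mul_laguerreKernel_self
  have gaussian := ((hmn.pow 2).const_mul (-4)).rexp
  have limit := ((mixed.pow 2).div ((diagonal.comp hm).mul (diagonal.comp hn))
    (by positivity)).mul gaussian
  rw [← pow_two, div_self (by positivity), one_mul, zero_pow two_ne_zero, mul_zero, exp_zero]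
    at limit
  refine limit.congr' ?_
  filter_upwards [hm.eventually_gt_atTop 0, hn.eventually_gt_atTop 0] with a hma hna
  have exp_eq : exp (-(4 * (√√(m a) * √√(n a)))) ^ 2 * exp (-4 * (√√(m a) - √√(n a)) ^ 2) =
      exp (-(4 * √(m a))) * exp (-(4 * √(n a))) := by
    rw [← exp_nat_mul, ← exp_add, ← exp_add, sub_sq, sq_sqrt (sqrt_nonneg _),
      sq_sqrt (sqrt_nonneg _)]
    congr 1
    push_cast
    ring
  have pow_eq : (√(√√(m a) * √√(n a)) ^ 3) ^ 2 = √√(m a) ^ 3 * √√(n a) ^ 3 := by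
    rw [pow_right_comm, sq_sqrt (by positivity), mul_pow]
  have kernel_m_pos := laguerreKernel_self_pos (m a)
  have kernel_n_pos := laguerreKernel_self_pos (n a)
  simp only [Pi.div_apply, Function.comp_apply, mul_pow, pow_eq]
  rw [div_mul_eq_mul_div, div_eq_div_iff (by positivity) (by positivity)]
  linear_combination √√(m a) ^ 3 * √√(n a) ^ 3 * laguerreKernel (m a) (n a) ^ 2 *
    laguerreKernel (m a) (m a) * laguerreKernel (n a) (n a) * exp_eq

lemma abs_sqrt_sqrt_sub_le {M N m n : ℕ} (hm : m ∈ Finset.Ico M (N + 1))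
    (hn : n ∈ Finset.Ico M (N + 1)) : |√√(m : ℝ) - √√n| ≤ √√N - √√M := by
  have bounds {i : ℕ} (hi : i ∈ Finset.Ico M (N + 1)) : √√(M : ℝ) ≤ √√i ∧ √√(i : ℝ) ≤ √√N := by
    obtain ⟨hMi, hiN⟩ := Finset.mem_Ico.1 hi
    have hiN : i ≤ N := Nat.lt_succ_iff.1 hiN
    constructor <;> gcongr
  exact abs_sub_le_of_le_of_le (bounds hm).1 (bounds hm).2 (bounds hn).1 (bounds hn).2

lemma eventually_forall_mul_laguerreKernel_le_sq {M : ℕ → ℕ} (hM : Tendsto M atTop atTop)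
    (hclose : Tendsto (fun N : ℕ ↦ √√(N : ℝ) - √√(M N)) atTop (𝓝 0)) {c : ℝ} (hc : c < 1) :
    ∀ᶠ N in atTop, ∀ m ∈ Finset.Ico (M N) (N + 1), ∀ n ∈ Finset.Ico (M N) (N + 1),
      c * (laguerreKernel m m * laguerreKernel n n) ≤ laguerreKernel m n ^ 2 := by
  -- Uniformity comes from a limit along the filter of all triples `(N, m, n)` with `m`, `n` in the
  -- window of `N`.
  let L : Filter (ℕ × ℕ × ℕ) := comap Prod.fst atTop ⊓
    𝓟 {p | p.2.1 ∈ Finset.Ico (M p.1) (p.1 + 1) ∧ p.2.2 ∈ Finset.Ico (M p.1) (p.1 + 1)}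
  have fst_tendsto : Tendsto (Prod.fst : ℕ × ℕ × ℕ → ℕ) L atTop :=
    tendsto_comap.mono_left inf_le_left
  have mem_window : ∀ᶠ p in L,
      p.2.1 ∈ Finset.Ico (M p.1) (p.1 + 1) ∧ p.2.2 ∈ Finset.Ico (M p.1) (p.1 + 1) :=
    eventually_inf_principal.2 (Eventually.of_forall fun p hp ↦ hp)
  have hm : Tendsto (fun p : ℕ × ℕ × ℕ ↦ p.2.1) L atTop :=
    tendsto_atTop_mono' L (mem_window.mono fun p hp ↦ (Finset.mem_Ico.1 hp.1).1)
      (hM.comp fst_tendsto)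
  have hn : Tendsto (fun p : ℕ × ℕ × ℕ ↦ p.2.2) L atTop :=
    tendsto_atTop_mono' L (mem_window.mono fun p hp ↦ (Finset.mem_Ico.1 hp.2).1)
      (hM.comp fst_tendsto)
  have hmn : Tendsto (fun p : ℕ × ℕ × ℕ ↦ √√(p.2.1 : ℝ) - √√(p.2.2 : ℝ)) L (𝓝 0) := by
    refine squeeze_zero_norm' ?_ (hclose.comp fst_tendsto)
    filter_upwards [mem_window] with p hp
    exact abs_sqrt_sqrt_sub_le hp.1 hp.2
  have := (tendsto_sq_laguerreKernel_div hm hn hmn).eventually_const_lt hc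
  filter_upwards [eventually_comap.1 (eventually_inf_principal.1 this)] with N hN m hm n hn
  exact (le_div_iff₀ (mul_pos (laguerreKernel_self_pos m) (laguerreKernel_self_pos n))).1
    (hN (N, m, n) rfl ⟨hm, hn⟩).le

end KernelAsymptotics

section Concentration

lemma mul_sq_sum_le_sum_sum_sq {ι : Type*} {s t : Finset ι} (hts : t ⊆ s) {κ : ι → ι → ℝ} {c : ℝ}
    (h : ∀ m ∈ t, ∀ n ∈ t, c * (κ m m * κ n n) ≤ κ m n ^ 2) :
    c * (∑ n ∈ t, κ n n) ^ 2 ≤ ∑ m ∈ s, ∑ n ∈ s, κ m n ^ 2 := by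
  calc c * (∑ n ∈ t, κ n n) ^ 2
      = ∑ m ∈ t, ∑ n ∈ t, c * (κ m m * κ n n) := by
        rw [pow_two, Finset.sum_mul_sum]
        simp only [Finset.mul_sum]
    _ ≤ ∑ m ∈ t, ∑ n ∈ t, κ m n ^ 2 :=
        Finset.sum_le_sum fun m hm ↦ Finset.sum_le_sum fun n hn ↦ h m hm n hn
    _ ≤ ∑ m ∈ t, ∑ n ∈ s, κ m n ^ 2 := Finset.sum_le_sum fun m _ ↦
        Finset.sum_le_sum_of_subset_of_nonneg hts fun n _ _ ↦ sq_nonneg _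
    _ ≤ ∑ m ∈ s, ∑ n ∈ s, κ m n ^ 2 := Finset.sum_le_sum_of_subset_of_nonneg hts
        fun m _ _ ↦ Finset.sum_nonneg fun n _ ↦ sq_nonneg _

lemma eventually_lt_sum_sum_sq_div_sq {κ : ℕ → ℕ → ℝ} {M : ℕ → ℕ}
    (hpos : ∀ᶠ N in atTop, 0 < ∑ n ∈ Finset.range (N + 1), κ n n) (hM : ∀ N, M N ≤ N + 1)
    (htail : Tendsto (fun N ↦ (∑ n ∈ Finset.range (M N), κ n n) /
      ∑ n ∈ Finset.range (N + 1), κ n n) atTop (𝓝 0))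
    (hκ : ∀ c < 1, ∀ᶠ N in atTop, ∀ m ∈ Finset.Ico (M N) (N + 1),
      ∀ n ∈ Finset.Ico (M N) (N + 1), c * (κ m m * κ n n) ≤ κ m n ^ 2)
    {c : ℝ} (hc : c < 1) :
    ∀ᶠ N in atTop, c < (∑ m ∈ Finset.range (N + 1), ∑ n ∈ Finset.range (N + 1), κ m n ^ 2) /
      (∑ n ∈ Finset.range (N + 1), κ n n) ^ 2 := by
  obtain ⟨d, hcd, hd⟩ := exists_between hc
  have window_limit := ((htail.const_sub 1).pow 2).const_mul d
  rw [sub_zero, one_pow, mul_one] at window_limit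
  filter_upwards [hpos, hκ d hd, window_limit.eventually_const_lt hcd] with N hN hwindow hlt
  refine hlt.trans_le ?_
  have window_sum := Finset.sum_Ico_eq_sub (fun n ↦ κ n n) (hM N)
  rw [one_sub_div hN.ne', div_pow, ← mul_div_assoc, ← window_sum]
  gcongr
  refine mul_sq_sum_le_sum_sum_sq (fun n hn ↦ ?_) hwindow
  exact Finset.mem_range.2 (Finset.mem_Ico.1 hn).2

end Concentration

section TraceAsymptotics

lemma tendsto_div_of_tendsto_sub_div_sub {a b : ℕ → ℝ} {L : ℝ} (hb : StrictMono b)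
    (hb_atTop : Tendsto b atTop atTop)
    (h : Tendsto (fun n ↦ (a (n + 1) - a n) / (b (n + 1) - b n)) atTop (𝓝 L)) :
    Tendsto (fun n ↦ a n / b n) atTop (𝓝 L) := by
  have step_pos (n : ℕ) : 0 < b (n + 1) - b n := sub_pos.2 (hb n.lt_succ_self)
  have sum_step (n : ℕ) : ∑ i ∈ Finset.range n, (b (i + 1) - b i) = b n - b 0 :=
    Finset.sum_range_sub b n
  have step_error : (fun n ↦ (a (n + 1) - a n) - L * (b (n + 1) - b n)) =o[atTop]
      fun n ↦ b (n + 1) - b n := by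
    refine (Asymptotics.isLittleO_iff_tendsto fun n hn ↦ absurd hn (step_pos n).ne').2 ?_
    rw [← sub_self L]
    refine (h.sub_const L).congr fun n ↦ ?_
    rw [div_sub' (step_pos n).ne', mul_comm L]
  have sum_error : (fun n ↦ (a n - a 0) - L * (b n - b 0)) =o[atTop] fun n ↦ b n - b 0 := by
    have := step_error.sum_range (fun n ↦ (step_pos n).le) (by
      simp only [sum_step]
      exact tendsto_atTop_add_const_right _ (-b 0) hb_atTop)
    simpa only [Finset.sum_sub_distrib (fun i ↦ a (i + 1) - a i), ← Finset.mul_sum, sum_step,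
      Finset.sum_range_sub a] using this
  have limit := (sum_error.tendsto_div_nhds_zero.mul
    ((hb_atTop.const_div_atTop (b 0)).const_sub 1)).add
      ((hb_atTop.const_div_atTop (a 0 - L * b 0)).add_const L)
  rw [zero_mul, zero_add, zero_add] at limit
  refine limit.congr' ?_
  filter_upwards [hb_atTop.eventually_gt_atTop 0, hb_atTop.eventually_gt_atTop (b 0)] with n hn hn0
  have := sub_pos.2 hn0
  field_simp
  ring

/-- The order of growth of `laguerreTrace`; its value at `0` is the junk value `0`. -/
noncomputable def szegoScale (n : ℕ) : ℝ := exp (4 * √n) / √√n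

lemma sqrt_succ_sub_sqrt (n : ℕ) : √(n + 1 : ℕ) - √n = (√(n + 1 : ℕ) + √n)⁻¹ := by
  refine eq_inv_of_mul_eq_one_left ?_
  rw [mul_comm, ← sq_sub_sq, sq_sqrt (by positivity), sq_sqrt (by positivity)]
  push_cast
  ring

lemma tendsto_sqrt_succ_sub_sqrt : Tendsto (fun n : ℕ ↦ √(n + 1 : ℕ) - √n) atTop (𝓝 0) := by
  simp only [sqrt_succ_sub_sqrt]
  exact tendsto_inv_atTop_zero.comp
    (tendsto_atTop_mono (fun n ↦ le_add_of_nonneg_left (sqrt_nonneg _)) tendsto_sqrt_natCast)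

lemma tendsto_sqrt_succ_mul_sub_sqrt :
    Tendsto (fun n : ℕ ↦ √(n + 1 : ℕ) * (√(n + 1 : ℕ) - √n)) atTop (𝓝 (1 / 2)) := by
  have sqrt_succ : Tendsto (fun n : ℕ ↦ √(n + 1 : ℕ)) atTop atTop :=
    tendsto_sqrt_natCast.comp (tendsto_add_atTop_nat 1)
  have := ((tendsto_div_one_of_tendsto_sub_zero sqrt_succ
    tendsto_sqrt_succ_sub_sqrt).const_add 1).inv₀ (by norm_num)
  rw [one_add_one_eq_two, ← one_div] at this
  refine this.congr fun n ↦ ?_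
  rw [sqrt_succ_sub_sqrt, one_add_div (by positivity), inv_div, div_eq_mul_inv]

lemma tendsto_sqrt_succ_mul_one_sub_exp :
    Tendsto (fun n : ℕ ↦ √(n + 1 : ℕ) * (1 - exp (-4 * (√(n + 1 : ℕ) - √n)))) atTop (𝓝 2) := by
  have gap_pos (n : ℕ) : 0 < √(n + 1 : ℕ) - √n := by
    rw [sqrt_succ_sub_sqrt]
    positivity
  have deriv_exp : HasDerivAt (fun t ↦ 1 - exp (-4 * t)) 4 0 := by
    simpa using (((hasDerivAt_id (0 : ℝ)).const_mul (-4)).exp).const_sub 1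
  have slope := (hasDerivAt_iff_tendsto_slope_zero.1 deriv_exp).comp
    (tendsto_nhdsWithin_iff.2 ⟨tendsto_sqrt_succ_sub_sqrt, .of_forall fun n ↦ (gap_pos n).ne'⟩)
  have := tendsto_sqrt_succ_mul_sub_sqrt.mul slope
  rw [show (1 / 2 * 4 : ℝ) = 2 by norm_num] at this
  refine this.congr fun n ↦ ?_
  have := (gap_pos n).ne'
  simp only [Function.comp_apply, smul_eq_mul, zero_add, mul_zero, exp_zero, sub_self, sub_zero]
  field_simp

lemma tendsto_sqrt_succ_mul_sqrt_sqrt_ratio_sub_one :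
    Tendsto (fun n : ℕ ↦ √(n + 1 : ℕ) * (√√(n + 1 : ℕ) / √√n - 1)) atTop (𝓝 0) := by
  have denominator : Tendsto (fun n : ℕ ↦ √√(n : ℝ) * (√√(n + 1 : ℕ) + √√n)) atTop atTop :=
    tendsto_sqrt_sqrt_natCast.atTop_mul_atTop₀
      (tendsto_atTop_mono (fun n ↦ le_add_of_nonneg_left (sqrt_nonneg _)) tendsto_sqrt_sqrt_natCast)
  refine (tendsto_sqrt_succ_mul_sub_sqrt.div_atTop denominator).congr' ?_
  filter_upwards [eventually_gt_atTop 0] with n hn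
  have factor : √(n + 1 : ℕ) - √n = (√√(n + 1 : ℕ) - √√n) * (√√(n + 1 : ℕ) + √√n) := by
    rw [mul_comm, ← sq_sub_sq, sq_sqrt (sqrt_nonneg _), sq_sqrt (sqrt_nonneg _)]
  rw [factor]
  field_simp

lemma tendsto_szegoScale_succ_sub :
    Tendsto (fun n : ℕ ↦ √√(n + 1 : ℕ) ^ 3 *
      (exp (-(4 * √(n + 1 : ℕ))) * (szegoScale (n + 1) - szegoScale n))) atTop (𝓝 2) := by
  have exp_gap := (tendsto_sqrt_succ_sub_sqrt.const_mul (-4)).rexp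
  have := tendsto_sqrt_succ_mul_one_sub_exp.sub
    (tendsto_sqrt_succ_mul_sqrt_sqrt_ratio_sub_one.mul exp_gap)
  rw [zero_mul, sub_zero] at this
  refine this.congr' ?_
  filter_upwards [eventually_gt_atTop 0] with n hn
  have exp_eq : exp (-4 * (√(n + 1 : ℕ) - √n)) = exp (-(4 * √(n + 1 : ℕ))) * exp (4 * √n) := by
    rw [← exp_add]
    ring_nf
  have sqrt_eq : √√(n + 1 : ℕ) ^ 3 = √(n + 1 : ℕ) * √√(n + 1 : ℕ) := by
    rw [pow_succ, sq_sqrt (sqrt_nonneg _)]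
  rw [exp_eq, exp_neg, szegoScale, szegoScale, sqrt_eq]
  field_simp
  ring

lemma tendsto_szegoScale_div_laguerreTrace :
    Tendsto (fun N ↦ szegoScale N / laguerreTrace N) atTop (𝓝 (8 * π * √(2 * π) * exp 1)) := by
  refine tendsto_div_of_tendsto_sub_div_sub strictMono_laguerreTrace tendsto_laguerreTrace_atTop ?_
  have := tendsto_szegoScale_succ_sub.div
    (tendsto_mul_laguerreKernel_self.comp (tendsto_add_atTop_nat 1)) (by positivity)
  have const_eq : 2 / (1 / (4 * π * √(2 * π)) * exp (-1)) = 8 * π * √(2 * π) * exp 1 := by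
    rw [exp_neg]
    field_simp
    norm_num
  rw [const_eq] at this
  refine this.congr fun n ↦ ?_
  rw [Pi.div_apply, Function.comp_apply, mul_div_mul_left _ _ (by positivity),
    mul_div_mul_left _ _ (exp_ne_zero _), laguerreTrace_succ, add_sub_cancel_left]

end TraceAsymptotics

section DominantWindow

/-- The rows `n ≥ windowStart N` carry almost all of `laguerreTrace N`, while `√√n` varies by `o(1)`
over `windowStart N ≤ n ≤ N`: the gap `√N - √(windowStart N) ≈ √√√N` is unbounded but `o(√√N)`. -/
noncomputable def windowStart (N : ℕ) : ℕ := ⌊√N - √√√N⌋₊ ^ 2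

lemma sqrt_windowStart (N : ℕ) : √(windowStart N) = ⌊√N - √√√N⌋₊ := by
  rw [windowStart, Nat.cast_pow, sqrt_sq (Nat.cast_nonneg _)]

lemma windowStart_le (N : ℕ) : windowStart N ≤ N := by
  have : √(windowStart N) ≤ √N := by
    rw [sqrt_windowStart]
    exact (Nat.cast_le.2 (Nat.floor_mono (sub_le_self _ (sqrt_nonneg _)))).trans
      (Nat.floor_le (sqrt_nonneg _))
  exact_mod_cast (sqrt_le_sqrt_iff (Nat.cast_nonneg _)).1 this

lemma tendsto_sqrt_sqrt_sqrt_natCast : Tendsto (fun n : ℕ ↦ √√√(n : ℝ)) atTop atTop :=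
  tendsto_sqrt_atTop.comp tendsto_sqrt_sqrt_natCast

lemma tendsto_sqrt_sub_sqrt_sqrt_sqrt :
    Tendsto (fun N : ℕ ↦ √(N : ℝ) - √√√(N : ℝ)) atTop atTop := by
  refine tendsto_atTop_mono' atTop ?_ tendsto_sqrt_sqrt_natCast
  filter_upwards [tendsto_sqrt_sqrt_natCast.eventually_ge_atTop 2] with N hN
  have sqrt_le : √√√(N : ℝ) ≤ √√N := sqrt_le_self_iff.2 (.inr (by linarith))
  nlinarith [mul_self_sqrt (sqrt_nonneg (N : ℝ))]

lemma tendsto_windowStart : Tendsto windowStart atTop atTop :=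
  (tendsto_pow_atTop two_ne_zero).comp
    (tendsto_nat_floor_atTop.comp tendsto_sqrt_sub_sqrt_sqrt_sqrt)

lemma tendsto_sqrt_sub_sqrt_windowStart :
    Tendsto (fun N : ℕ ↦ √(N : ℝ) - √(windowStart N)) atTop atTop := by
  refine tendsto_atTop_mono' atTop ?_ tendsto_sqrt_sqrt_sqrt_natCast
  filter_upwards [tendsto_sqrt_sub_sqrt_sqrt_sqrt.eventually_ge_atTop 0] with N hN
  rw [sqrt_windowStart]
  linarith [Nat.floor_le hN]

lemma tendsto_sqrt_sqrt_sub_sqrt_sqrt_windowStart :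
    Tendsto (fun N : ℕ ↦ √√(N : ℝ) - √√(windowStart N)) atTop (𝓝 0) := by
  have bound : Tendsto (fun N : ℕ ↦ (√√√(N : ℝ))⁻¹ + (√√(N : ℝ))⁻¹) atTop (𝓝 0) := by
    rw [← add_zero 0]
    exact tendsto_sqrt_sqrt_sqrt_natCast.inv_tendsto_atTop.add
      tendsto_sqrt_sqrt_natCast.inv_tendsto_atTop
  have window_le (N : ℕ) : √√(windowStart N) ≤ √√N := by
    have := windowStart_le N
    gcongr
  refine tendsto_of_tendsto_of_tendsto_of_le_of_le' tendsto_const_nhds bound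
    (.of_forall fun N ↦ sub_nonneg.2 (window_le N)) ?_
  filter_upwards [tendsto_sqrt_sqrt_natCast.eventually_gt_atTop 0] with N hN
  calc √√(N : ℝ) - √√(windowStart N)
      ≤ (√√(N : ℝ) - √√(windowStart N)) * (√√N + √√(windowStart N)) / √√N := by
        rw [le_div_iff₀ hN]
        exact mul_le_mul_of_nonneg_left (le_add_of_nonneg_right (sqrt_nonneg _))
          (sub_nonneg.2 (window_le N))
    _ = (√N - √(windowStart N)) / √√N := by
        rw [mul_comm, ← sq_sub_sq, sq_sqrt (sqrt_nonneg _), sq_sqrt (sqrt_nonneg _)]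
    _ ≤ (√√√N + 1) / √√N := by
        rw [sqrt_windowStart]
        gcongr
        linarith [Nat.lt_floor_add_one (√(N : ℝ) - √√√N)]
    _ = (√√√(N : ℝ))⁻¹ + (√√(N : ℝ))⁻¹ := by
        rw [add_div, sqrt_div_self', one_div, one_div]

lemma tendsto_szegoScale_windowStart_div :
    Tendsto (fun N ↦ szegoScale (windowStart N) / szegoScale N) atTop (𝓝 0) := by
  have exp_gap := tendsto_exp_neg_atTop_nhds_zero.comp
    (tendsto_sqrt_sub_sqrt_windowStart.const_mul_atTop (zero_lt_four' ℝ))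
  have ratio := (tendsto_div_one_of_tendsto_sub_zero tendsto_sqrt_sqrt_natCast
    tendsto_sqrt_sqrt_sub_sqrt_sqrt_windowStart).inv₀ one_ne_zero
  have := exp_gap.mul ratio
  rw [zero_mul] at this
  refine this.congr fun N ↦ ?_
  rw [Function.comp_apply, szegoScale, szegoScale, mul_sub, neg_sub, exp_sub, inv_div,
    div_mul_div_comm, div_div_div_eq,
    mul_comm √√(windowStart N : ℝ)]

lemma tendsto_sum_range_windowStart_div_laguerreTrace :
    Tendsto (fun N ↦ (∑ n ∈ Finset.range (windowStart N), laguerreKernel n n) / laguerreTrace N)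
      atTop (𝓝 0) := by
  have scale_div := tendsto_szegoScale_div_laguerreTrace
  have limit := (((scale_div.comp tendsto_windowStart).inv₀ (by positivity)).mul
    tendsto_szegoScale_windowStart_div).mul scale_div
  rw [mul_zero, zero_mul] at limit
  have trace_div : Tendsto (fun N ↦ laguerreTrace (windowStart N) / laguerreTrace N) atTop
      (𝓝 0) := by
    refine limit.congr' ?_
    filter_upwards [eventually_gt_atTop 0, tendsto_windowStart.eventually_gt_atTop 0] with N hN hM
    have scale_N_pos : 0 < szegoScale N := by unfold szegoScale; positivity
    have scale_M_pos : 0 < szegoScale (windowStart N) := by unfold szegoScale; positivity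
    rw [Function.comp_apply]
    field_simp
  refine squeeze_zero (fun N ↦ ?_) (fun N ↦ ?_) trace_div
  · exact div_nonneg (Finset.sum_nonneg fun n _ ↦ (laguerreKernel_self_pos n).le)
      (laguerreTrace_pos N).le
  · refine div_le_div_of_nonneg_right ?_ (laguerreTrace_pos N).le
    rw [laguerreTrace, Finset.sum_range_succ]
    exact le_add_of_nonneg_right (laguerreKernel_self_pos _).le

end DominantWindow

section SmallestEigenvalue

lemma tendsto_mul_laguerreTrace {lam : ℕ → ℝ}
    (hlam : ∀ N, IsLeast (spectrum ℝ (laguerreHankel N)) (lam N)) :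
    Tendsto (fun N ↦ lam N * laguerreTrace N) atTop (𝓝 1) := by
  have inv_greatest (N : ℕ) := isGreatest_spectrum_inv (posDef_laguerreHankel N) (hlam N)
  have inv_posSemidef (N : ℕ) := (posDef_laguerreHankel N).inv.posSemidef
  have upper (N : ℕ) : (lam N)⁻¹ / laguerreTrace N ≤ 1 := by
    rw [div_le_one (laguerreTrace_pos N), ← trace_laguerreHankel_inv]
    exact le_trace_of_mem_spectrum (inv_posSemidef N) (inv_greatest N).1
  have lower (N : ℕ) : (∑ m ∈ Finset.range (N + 1), ∑ n ∈ Finset.range (N + 1),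
      laguerreKernel m n ^ 2) / laguerreTrace N ^ 2 ≤ (lam N)⁻¹ / laguerreTrace N := by
    have := laguerreTrace_pos N
    rw [div_le_div_iff₀ (by positivity) this, pow_two, ← mul_assoc]
    refine mul_le_mul_of_nonneg_right ?_ this.le
    rw [← trace_laguerreHankel_inv_mul_self, ← trace_laguerreHankel_inv]
    exact trace_mul_self_le_of_mem_upperBounds_spectrum (inv_posSemidef N) (inv_greatest N).2
  have inv_limit : Tendsto (fun N ↦ (lam N)⁻¹ / laguerreTrace N) atTop (𝓝 1) := by
    refine tendsto_order.2 ⟨fun c hc ↦ ?_, fun c hc ↦ .of_forall fun N ↦ (upper N).trans_lt hc⟩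
    refine (eventually_lt_sum_sum_sq_div_sq (.of_forall laguerreTrace_pos)
      (fun N ↦ (windowStart_le N).trans N.le_succ) tendsto_sum_range_windowStart_div_laguerreTrace
      (fun d ↦ eventually_forall_mul_laguerreKernel_le_sq tendsto_windowStart
        tendsto_sqrt_sqrt_sub_sqrt_sqrt_windowStart) hc).mono fun N hN ↦ hN.trans_le (lower N)
  have := inv_limit.inv₀ one_ne_zero
  rw [inv_one] at this
  refine this.congr fun N ↦ ?_
  rw [inv_div, div_inv_eq_mul, mul_comm]

end SmallestEigenvalue

lemma two_rpow_mul_pi_rpow :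
    (2 : ℝ) ^ ((7 : ℝ) / 2) * π ^ ((3 : ℝ) / 2) = 8 * π * √(2 * π) := by
  have two_rpow : (2 : ℝ) ^ ((7 : ℝ) / 2) = 8 * √2 := by
    rw [show (7 : ℝ) / 2 = (3 : ℕ) + 1 / 2 by norm_num, rpow_add two_pos, rpow_natCast,
      ← sqrt_eq_rpow]
    norm_num
  have pi_rpow : π ^ ((3 : ℝ) / 2) = π * √π := by
    rw [show (3 : ℝ) / 2 = 1 + 1 / 2 by norm_num, rpow_add pi_pos, rpow_one, ← sqrt_eq_rpow]
  rw [two_rpow, pi_rpow, sqrt_mul zero_le_two]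
  ring

lemma rpow_one_div_four {x : ℝ} (hx : 0 ≤ x) : x ^ ((1 : ℝ) / 4) = √√x := by
  rw [sqrt_eq_rpow, sqrt_eq_rpow, ← rpow_mul hx]
  norm_num

/-- **Szegő.** For the Laguerre weight `exp(−x)` on `[0,∞)`,
the smallest eigenvalue `lam N` of the `(N+1)×(N+1)` Hankel matrix satisfies
`lam N ≃ 2^{7/2} π^{3/2} e N^{1/4} exp(−4√N)` as `N → ∞`. -/
theorem szego_laguerre_smallest_eigenvalue
    (μ : ℕ → ℝ) (hμ : ∀ k, μ k = ∫ x in Set.Ioi (0:ℝ), x ^ k * Real.exp (-x))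
    (H : (N : ℕ) → Matrix (Fin (N + 1)) (Fin (N + 1)) ℝ)
    (hH : ∀ N, ∀ j k : Fin (N + 1), H N j k = μ ((j : ℕ) + (k : ℕ)))
    (hpd : ∀ N, (H N).PosDef)
    (lam : ℕ → ℝ)
    (hlam : ∀ N, IsLeast
      {x : ℝ | Module.End.HasEigenvalue (Matrix.toLin' (H N)) x} (lam N)) :
    Tendsto (fun N : ℕ =>
      lam N /
        ((2:ℝ) ^ ((7:ℝ)/2) * π ^ ((3:ℝ)/2) * Real.exp 1 * (N : ℝ) ^ ((1:ℝ)/4) *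
          Real.exp (-4 * Real.sqrt N)))
      atTop (nhds 1) := by
  have hankel_eq (N : ℕ) : H N = laguerreHankel N := by
    ext j k
    rw [hH, hμ, integral_pow_mul_exp_neg_Ioi, laguerreHankel, Matrix.of_apply]
  have lam_least (N : ℕ) : IsLeast (spectrum ℝ (laguerreHankel N)) (lam N) := by
    simpa only [Module.End.hasEigenvalue_iff_mem_spectrum, Matrix.spectrum_toLin', hankel_eq,
      Set.ofPred_mem_eq] using hlam N
  have limit := ((tendsto_mul_laguerreTrace lam_least).mul
    tendsto_szegoScale_div_laguerreTrace).div_const (8 * π * √(2 * π) * exp 1)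
  rw [one_mul, div_self (by positivity)] at limit
  refine limit.congr' ?_
  filter_upwards [eventually_gt_atTop 0] with N hN
  have := laguerreTrace_pos N
  rw [two_rpow_mul_pi_rpow, rpow_one_div_four N.cast_nonneg, szegoScale, neg_mul, exp_neg]
  field_simp
end

section
/- Fix β with 0 < β < 1/2 and let λ_N be as in the context. Then there exists a constant c > 0 such that λ_N ≥ c for all N ∈ ℕ; that is, the smallest eigenvalue of the infinite Hankel matrix associated with the weight exp(−x^β) is bounded below by a positive constant. -/
open MeasureTheory Real Filter Topology

/-!
For `β < 1 / 2` there is an outer function `E` of the upper half-plane with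
`|E t| = exp (-(t ^ 2) ^ β)` on the real axis. Given a polynomial `P`, the Poisson integral of
`t * P (t ^ 2) ^ 2 * E t` and the substitution `x = t ^ 2` bound `|P z| ^ 2 * |z.im|`, locally
uniformly in `z` and independently of the degree, by the squared norm of `P` in
`L²((0, ∞), exp (-x ^ β) dx)`. The maximum principle applied to `(z ^ 2 - 4) * P z ^ 2` on the disc
of radius `2` removes the factor `|z.im|` on the unit circle, so Parseval bounds the `ℓ²` norm of
the coefficients of `P` by its weighted `L²` norm, whose square is the quadratic form of the Hankel
matrix.
-/

open Asymptotics Bornology Polynomial ProbabilityTheory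
open scoped ComplexConjugate Matrix

section UpperHalfPlane

variable {E : Type*} [NormedAddCommGroup E] [NormedSpace ℂ E] {f : ℂ → E}

lemma norm_intervalIntegral_le_of_norm_le_upperHalfPlane
    (hf : DiffContOnCl ℂ f {z | 0 < z.im}) {R C : ℝ} (hR : 0 ≤ R)
    (hC : ∀ z : ℂ, 0 ≤ z.im → R ≤ ‖z‖ → ‖f z‖ ≤ C) :
    ‖∫ x in (-R)..R, f x‖ ≤ 4 * R * C := by
  have hcont : ContinuousOn f {z | 0 ≤ z.im} := by
    simpa only [Complex.closure_setOfPred_lt_im] using hf.continuousOn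
  have top : ‖∫ x in (-R)..R, f (x + R * Complex.I)‖ ≤ C * |R - -R| := by
    refine intervalIntegral.norm_integral_le_of_norm_le_const fun x _ ↦ hC _ (by simpa using hR) ?_
    exact (le_abs_self R).trans (by simpa using Complex.abs_im_le_norm (x + R * Complex.I))
  have side (a : ℝ) (ha : R ≤ |a|) : ‖∫ y in (0)..R, f (a + y * Complex.I)‖ ≤ C * |R - 0| := by
    refine intervalIntegral.norm_integral_le_of_norm_le_const fun y hy ↦ hC _ ?_ ?_
    · rw [Set.uIoc_of_le hR] at hy
      simpa using hy.1.le
    · exact ha.trans (by simpa using Complex.abs_re_le_norm (a + y * Complex.I))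
  have rect := Complex.integral_boundary_rect_eq_zero_of_continuousOn_of_differentiableOn f
    (-R : ℝ) (R + R * Complex.I)
    (hcont.mono fun z hz ↦ by simpa [hR] using hz.2.1)
    (hf.differentiableOn.mono fun z hz ↦ by simpa [hR] using hz.2.1)
  simp only [Complex.ofReal_re, Complex.ofReal_im, Complex.add_re, Complex.add_im,
    Complex.re_ofReal_mul, Complex.im_ofReal_mul, Complex.I_re, Complex.I_im, Complex.ofReal_zero,
    mul_zero, mul_one, zero_mul, zero_add, add_zero] at rect
  have base_eq : ∫ x in (-R)..R, f x = (∫ x in (-R)..R, f (x + R * Complex.I)) +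
      (Complex.I • (∫ y in (0)..R, f ((-R : ℝ) + y * Complex.I)) -
        Complex.I • ∫ y in (0)..R, f (R + y * Complex.I)) := by
    rw [← sub_eq_zero, ← rect]
    abel
  calc ‖∫ x in (-R)..R, f x‖
      ≤ C * |R - -R| + (C * |R - 0| + C * |R - 0|) := by
        rw [base_eq]
        refine norm_add_le_of_le top (norm_sub_le_of_le ?_ ?_) <;>
          rw [norm_smul, Complex.norm_I, one_mul]
        · exact side (-R) (by simpa using le_abs_self R)
        · exact side R (le_abs_self R)
    _ = 4 * R * C := by
        rw [sub_neg_eq_add, sub_zero, abs_of_nonneg hR, abs_of_nonneg (add_nonneg hR hR)]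
        ring

lemma integral_ofReal_eq_zero_of_isLittleO_inv (hf : DiffContOnCl ℂ f {z | 0 < z.im})
    (hdecay : f =o[cobounded ℂ ⊓ 𝓟 {z | 0 ≤ z.im}] fun z ↦ z⁻¹)
    (hint : Integrable fun x : ℝ ↦ f x) : ∫ x : ℝ, f x = 0 := by
  refine tendsto_nhds_unique
    (intervalIntegral_tendsto_integral hint tendsto_neg_atTop_atBot tendsto_id)
    (Metric.tendsto_nhds.2 fun ε hε ↦ ?_)
  obtain ⟨R₀, -, hR₀⟩ := ((hasBasis_cobounded_norm (E := ℂ)).inf_principal _).eventually_iff.1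
    (hdecay.def (show 0 < ε / 8 by positivity))
  filter_upwards [eventually_ge_atTop R₀, eventually_gt_atTop 0] with R hRR₀ hR
  have bound (z : ℂ) (hz : 0 ≤ z.im) (hRz : R ≤ ‖z‖) : ‖f z‖ ≤ ε / 8 * R⁻¹ := by
    refine (hR₀ ⟨hRR₀.trans hRz, hz⟩).trans ?_
    rw [norm_inv]
    gcongr
  calc dist (∫ x in (-R)..R, f x) 0 ≤ 4 * R * (ε / 8 * R⁻¹) := by
        rw [dist_zero_right]
        exact norm_intervalIntegral_le_of_norm_le_upperHalfPlane hf hR.le bound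
    _ = ε / 2 := by field_simp; norm_num
    _ < ε := half_lt_self hε

lemma sub_conj_ne_zero {z w : ℂ} (hz : 0 < z.im) (hw : 0 ≤ w.im) : w - conj z ≠ 0 := by
  intro h
  have him : (w - conj z).im = w.im + z.im := by simp
  rw [h, Complex.zero_im] at him
  linarith

lemma diffContOnCl_inv_sub_conj_smul_dslope [CompleteSpace E]
    (hf : DiffContOnCl ℂ f {z | 0 < z.im}) {z : ℂ} (hz : 0 < z.im) :
    DiffContOnCl ℂ (fun w ↦ (w - conj z)⁻¹ • dslope f z w) {z | 0 < z.im} := by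
  have hnhds : {w : ℂ | 0 < w.im} ∈ 𝓝 z :=
    (isOpen_lt continuous_const Complex.continuous_im).mem_nhds hz
  have hdslope : DiffContOnCl ℂ (dslope f z) {w | 0 < w.im} :=
    ⟨(Complex.differentiableOn_dslope hnhds).2 hf.differentiableOn,
      (continuousOn_dslope (mem_of_superset hnhds subset_closure)).2
        ⟨hf.continuousOn, hf.differentiableAt' hnhds⟩⟩
  refine DiffContOnCl.smul (DiffContOnCl.inv (Differentiable.diffContOnCl (by fun_prop)) ?_) hdslope
  rw [Complex.closure_setOfPred_lt_im]
  exact fun w hw ↦ sub_conj_ne_zero hz hw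

lemma isLittleO_inv_sub_conj_smul_dslope {l : Filter ℂ} (hl : l ≤ cobounded ℂ)
    (hbdd : f =O[l] fun _ ↦ (1 : ℂ)) (z : ℂ) :
    (fun w ↦ (w - conj z)⁻¹ • dslope f z w) =o[l] fun w ↦ w⁻¹ := by
  have inv_sub (a : ℂ) : (fun w : ℂ ↦ (w - a)⁻¹) =O[l] fun w ↦ w⁻¹ :=
    ((IsEquivalent.refl.sub_isLittleO
      (isLittleO_const_id_cobounded a)).inv.isBigO).mono hl
  have numerator : (fun w ↦ f w - f z) =O[l] fun _ ↦ (1 : ℂ) :=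
    hbdd.sub (isBigO_const_const (f z) one_ne_zero l)
  have inv_vanishes : (fun w : ℂ ↦ w⁻¹) =o[l] fun _ ↦ (1 : ℂ) :=
    (isLittleO_one_iff ℂ).2 (tendsto_inv₀_cobounded.mono_left hl)
  have slope_vanishes : dslope f z =o[l] fun _ ↦ (1 : ℂ) := by
    have hslope : (fun w ↦ (w - z)⁻¹ • (f w - f z)) =o[l] fun _ ↦ (1 : ℂ) := by
      simpa using ((inv_sub z).trans_isLittleO inv_vanishes).smul_isBigO numerator
    refine hslope.congr' ?_ EventuallyEq.rfl
    filter_upwards [hl (eventually_ne_cobounded z)] with w hw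
    rw [dslope_of_ne _ hw, slope_def_module]
  simpa using (inv_sub (conj z)).smul_isLittleO slope_vanishes

lemma inv_sub_conj_smul_dslope_ofReal {z : ℂ} (hz : 0 < z.im) (t : ℝ) :
    (z.im / π) • ((t - conj z)⁻¹ • dslope f z t) =
      cauchyPDFReal z.re z.im.toNNReal t • (f t - f z) := by
  have hne : (t : ℂ) ≠ z := fun h ↦ by simp [← h] at hz
  have hprod : ((t : ℂ) - conj z) * (t - z) = (((t - z.re) ^ 2 + z.im ^ 2 : ℝ) : ℂ) := by
    apply Complex.ext <;> simp [-Complex.ofReal_add, -Complex.ofReal_pow] <;> ring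
  rw [dslope_of_ne _ hne, slope_def_module, smul_smul ((t : ℂ) - conj z)⁻¹, ← mul_inv, hprod,
    ← Complex.ofReal_inv, Complex.coe_smul, smul_smul, cauchyPDFReal_def, coe_toNNReal _ hz.le]
  congr 1
  ring

theorem integral_cauchyPDFReal_smul_eq [CompleteSpace E]
    (hf : DiffContOnCl ℂ f {z | 0 < z.im}) {K : ℝ} (hK : ∀ z : ℂ, 0 ≤ z.im → ‖f z‖ ≤ K)
    {z : ℂ} (hz : 0 < z.im) :
    ∫ t : ℝ, cauchyPDFReal z.re z.im.toNNReal t • f t = f z := by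
  set p := cauchyPDFReal z.re z.im.toNNReal
  have hcont : Continuous fun t : ℝ ↦ f t :=
    hf.continuousOn.comp_continuous Complex.continuous_ofReal (by simp)
  have int_p : Integrable p := integrable_cauchyPDFReal z.re
  have int_pf : Integrable fun t : ℝ ↦ p t • f t :=
    int_p.smul_bdd K hcont.aestronglyMeasurable (.of_forall fun t ↦ hK t (by simp))
  have hzero : ∫ t : ℝ, p t • (f t - f z) = 0 := by
    have hdecay := isLittleO_inv_sub_conj_smul_dslope
      (l := cobounded ℂ ⊓ 𝓟 {w : ℂ | 0 ≤ w.im}) inf_le_left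
      (.of_bound K <| eventually_inf_principal.2 <| .of_forall fun w hw ↦ by simpa using hK w hw) z
    have int_diff : Integrable fun t : ℝ ↦ p t • (f t - f z) := by
      simp_rw [smul_sub]
      exact int_pf.sub (int_p.smul_const (f z))
    simp_rw [p, ← inv_sub_conj_smul_dslope_ofReal hz] at int_diff ⊢
    rw [integral_smul, integral_ofReal_eq_zero_of_isLittleO_inv
      (diffContOnCl_inv_sub_conj_smul_dslope hf hz) hdecay, smul_zero]
    exact (integrable_smul_iff (div_pos hz pi_pos).ne' _).1 int_diff
  simp_rw [smul_sub] at hzero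
  rwa [integral_sub int_pf (int_p.smul_const (f z)), integral_smul_const,
    integral_cauchyPDFReal_eq_one _ (by simpa using hz), one_smul, sub_eq_zero] at hzero

lemma cauchyPDFReal_le (x₀ : ℝ) (γ : NNReal) (x : ℝ) :
    cauchyPDFReal x₀ γ x ≤ (π * γ)⁻¹ := by
  rw [cauchyPDFReal_def', mul_inv]
  refine mul_le_of_le_one_right (by positivity) (inv_le_one_of_one_le₀ ?_)
  exact le_add_of_nonneg_right (sq_nonneg _)

lemma norm_le_integral_of_norm_ofReal_le [CompleteSpace E]
    (hf : DiffContOnCl ℂ f {z | 0 < z.im}) {K : ℝ} (hK : ∀ z : ℂ, 0 ≤ z.im → ‖f z‖ ≤ K)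
    {g : ℝ → ℝ} (hg : Integrable g) (hfg : ∀ t : ℝ, ‖f t‖ ≤ g t) {z : ℂ} (hz : 0 < z.im) :
    ‖f z‖ ≤ (π * z.im)⁻¹ * ∫ t, g t := by
  rw [← integral_cauchyPDFReal_smul_eq hf hK hz, ← integral_const_mul]
  refine norm_integral_le_of_norm_le (hg.const_mul _) (.of_forall fun t ↦ ?_)
  have hpos := cauchyPDF_pos z.re (γ := z.im.toNNReal) (by simpa using hz) t
  have hle := cauchyPDFReal_le z.re z.im.toNNReal t
  rw [coe_toNNReal _ hz.le] at hle
  rw [norm_smul, norm_of_nonneg hpos.le]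
  gcongr
  exact hfg t

end UpperHalfPlane

section MaximumPrinciple

variable {E : Type*} [NormedAddCommGroup E] [NormedSpace ℂ E] {f : ℂ → E}

lemma norm_sq_sub_sq_norm (z : ℂ) : ‖z ^ 2 - (‖z‖ : ℂ) ^ 2‖ = 2 * ‖z‖ * |z.im| := by
  have hfactor : z ^ 2 - (‖z‖ : ℂ) ^ 2 = z * (z - conj z) := by
    rw [← Complex.mul_conj']
    ring
  rw [hfactor, norm_mul, Complex.sub_conj, norm_mul, Complex.norm_I, mul_one, Complex.norm_real,
    norm_eq_abs, abs_mul, abs_two]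
  ring

/- The factor `z ^ 2 - R ^ 2` vanishes at the two real points of the circle, where the hypothesis
gives no control on `f`. -/
lemma norm_mul_sq_sub_sq_le_of_norm_mul_abs_im_le {R C : ℝ}
    (hf : DiffContOnCl ℂ f (Metric.ball 0 R)) (hC : ∀ z : ℂ, ‖z‖ = R → ‖f z‖ * |z.im| ≤ C)
    {z : ℂ} (hz : ‖z‖ < R) :
    ‖f z‖ * (R ^ 2 - ‖z‖ ^ 2) ≤ 2 * R * C := by
  have hR : 0 < R := (norm_nonneg z).trans_lt hz
  have hcircle (w : ℂ) (hw : ‖w‖ = R) : ‖(w ^ 2 - (R : ℂ) ^ 2) • f w‖ ≤ 2 * R * C := by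
    rw [norm_smul, ← hw, norm_sq_sub_sq_norm, hw, mul_assoc, mul_comm |w.im|]
    gcongr
    exact hC w hw
  have hfactor : DiffContOnCl ℂ (fun w : ℂ ↦ w ^ 2 - (R : ℂ) ^ 2) (Metric.ball 0 R) :=
    Differentiable.diffContOnCl (by fun_prop)
  calc ‖f z‖ * (R ^ 2 - ‖z‖ ^ 2) ≤ ‖f z‖ * ‖z ^ 2 - (R : ℂ) ^ 2‖ := by
        gcongr
        have htri := norm_sub_norm_le ((R : ℂ) ^ 2) (z ^ 2)
        rwa [norm_pow, norm_pow, Complex.norm_real, norm_of_nonneg hR.le, norm_sub_rev] at htri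
    _ = ‖(z ^ 2 - (R : ℂ) ^ 2) • f z‖ := by rw [norm_smul, mul_comm]
    _ ≤ 2 * R * C := by
        refine Complex.norm_le_of_forall_mem_frontier_norm_le Metric.isBounded_ball
          (hfactor.smul hf) (fun w hw ↦ ?_) (subset_closure (mem_ball_zero_iff.2 hz))
        rw [frontier_ball _ hR.ne', mem_sphere_zero_iff_norm] at hw
        exact hcircle w hw

end MaximumPrinciple

section SquareSubstitution

lemma integrable_abs_mul_comp_sq {f : ℝ → ℝ} (hf : IntegrableOn f (Set.Ioi 0)) :
    Integrable fun t ↦ |t| * f (t ^ 2) := by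
  have hpos : IntegrableOn (fun t ↦ |t| * f (t ^ 2)) (Set.Ioi 0) := by
    refine ((integrableOn_Ioi_comp_rpow_iff' f two_ne_zero).2 hf).congr_fun (fun t ht ↦ ?_)
      measurableSet_Ioi
    simp only
    rw [rpow_two, abs_of_pos ht, smul_eq_mul, show (2 : ℝ) - 1 = 1 by norm_num, rpow_one]
  have hneg : IntegrableOn (fun t ↦ |t| * f (t ^ 2)) (Set.Iic 0) := by
    have := (Measure.measurePreserving_neg (volume : Measure ℝ)).integrableOn_comp_preimage
      (Homeomorph.neg ℝ).measurableEmbedding (f := fun t ↦ |t| * f (t ^ 2)) (s := Set.Iic 0)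
    refine this.1 ?_
    simpa [Function.comp_def, integrableOn_Ici_iff_integrableOn_Ioi] using hpos
  rw [← integrableOn_univ, ← Set.Iic_union_Ioi (a := (0 : ℝ))]
  exact hneg.union hpos

lemma integral_abs_mul_comp_sq (f : ℝ → ℝ) :
    ∫ t, |t| * f (t ^ 2) = ∫ x in Set.Ioi 0, f x := by
  calc ∫ t, |t| * f (t ^ 2) = ∫ t, |t| * f (|t| ^ 2) := by simp_rw [sq_abs]
    _ = 2 * ∫ t in Set.Ioi 0, t * f (t ^ 2) := integral_comp_abs (f := fun t ↦ t * f (t ^ 2))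
    _ = ∫ t in Set.Ioi 0, (2 * t ^ ((2 : ℝ) - 1)) • f (t ^ (2 : ℝ)) := by
        rw [← integral_const_mul]
        norm_num [mul_assoc]
    _ = ∫ x in Set.Ioi 0, f x := integral_comp_rpow_Ioi_of_pos two_pos

end SquareSubstitution

section PolynomialGrowth

lemma rpow_le_rpow_self_mul_exp {s x : ℝ} (hs : 0 ≤ s) (hx : 0 ≤ x) : x ^ s ≤ s ^ s * exp x := by
  rcases hs.eq_or_lt with rfl | hs
  · simpa using hx
  calc x ^ s = s ^ s * (x / s) ^ s := by
        rw [← mul_rpow hs.le (by positivity), mul_div_cancel₀ _ hs.ne']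
    _ ≤ s ^ s * exp (x / s) ^ s := by
        gcongr
        linarith [add_one_le_exp (x / s)]
    _ = s ^ s * exp x := by rw [← exp_mul, div_mul_cancel₀ _ hs.ne']

lemma isBigO_top_eval_exp_norm_rpow {𝕜 : Type*} [NormedField 𝕜] {α : ℝ} (hα : 0 < α) (P : 𝕜[X]) :
    (fun z ↦ P.eval z) =O[⊤] fun z ↦ exp (‖z‖ ^ α) := by
  induction P using Polynomial.induction_on' with
  | add p q hp hq => simpa only [eval_add] using hp.add hq
  | monomial n a =>
    simp only [eval_monomial]
    refine IsBigO.const_mul_left (.of_bound ((n / α) ^ (n / α)) (.of_forall fun z ↦ ?_)) a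
    calc ‖z ^ n‖ = (‖z‖ ^ α) ^ (n / α) := by
          rw [← rpow_mul (norm_nonneg z), mul_div_cancel₀ _ hα.ne', rpow_natCast, norm_pow]
      _ ≤ (n / α) ^ (n / α) * ‖exp (‖z‖ ^ α)‖ := by
          rw [norm_of_nonneg (exp_pos _).le]
          exact rpow_le_rpow_self_mul_exp (by positivity) (by positivity)

variable {β : ℝ}

lemma integrableOn_pow_mul_exp_neg_rpow (hβ : 0 < β) (n : ℕ) :
    IntegrableOn (fun x ↦ x ^ n * exp (-x ^ β)) (Set.Ioi 0) := by
  simpa only [rpow_natCast] using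
    integrableOn_rpow_mul_exp_neg_rpow (neg_one_lt_zero.trans_le n.cast_nonneg) hβ

lemma integrableOn_eval_mul_exp_neg_rpow (hβ : 0 < β) (P : ℂ[X]) :
    IntegrableOn (fun x : ℝ ↦ P.eval (x : ℂ) * (exp (-x ^ β) : ℝ)) (Set.Ioi 0) := by
  induction P using Polynomial.induction_on' with
  | add p q hp hq =>
    simp only [eval_add, add_mul]
    exact hp.add hq
  | monomial n a =>
    refine IntegrableOn.congr_fun
      ((integrableOn_pow_mul_exp_neg_rpow hβ n).ofReal (𝕜 := ℂ) |>.const_mul a) (fun x _ ↦ ?_)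
      measurableSet_Ioi
    simp [mul_assoc]

/-- The squared norm of `P` in `L²((0, ∞), exp (-x ^ β) dx)`. -/
noncomputable def expWeightNormSq (β : ℝ) (P : ℂ[X]) : ℝ :=
  ∫ x in Set.Ioi (0 : ℝ), ‖P.eval (x : ℂ)‖ ^ 2 * exp (-x ^ β)

lemma integrableOn_norm_sq_eval_mul_exp_neg_rpow (hβ : 0 < β) (P : ℂ[X]) :
    IntegrableOn (fun x : ℝ ↦ ‖P.eval (x : ℂ)‖ ^ 2 * exp (-x ^ β)) (Set.Ioi 0) := by
  refine IntegrableOn.congr_fun (integrableOn_eval_mul_exp_neg_rpow hβ (P ^ 2)).norm (fun x _ ↦ ?_)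
    measurableSet_Ioi
  rw [eval_pow, norm_mul, norm_pow, Complex.norm_real, norm_of_nonneg (exp_pos _).le]

end PolynomialGrowth

section OuterFunction

variable {β : ℝ}

lemma cos_pi_mul_pos (hβ₀ : 0 ≤ β) (hβ : β < 1 / 2) : 0 < cos (π * β) :=
  cos_pos_of_mem_Ioo ⟨by nlinarith [pi_pos], by nlinarith [pi_pos]⟩

/-- The outer function of the upper half-plane whose modulus on the real axis is
`exp (-(t ^ 2) ^ β)`, the weight after the substitution `x = t ^ 2`. Multiplication by `-I` maps the
upper half-plane to the right half-plane, where the principal power is holomorphic. -/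
noncomputable def expWeightOuter (β : ℝ) (t : ℂ) : ℂ :=
  Complex.exp (-((-Complex.I * t) ^ ((2 * β : ℝ) : ℂ) / cos (π * β)))

lemma norm_expWeightOuter (β : ℝ) (t : ℂ) :
    ‖expWeightOuter β t‖ =
      exp (-(‖t ^ 2‖ ^ β * cos ((-Complex.I * t).arg * (2 * β)) / cos (π * β))) := by
  rw [expWeightOuter, Complex.norm_exp, Complex.neg_re, Complex.div_ofReal_re,
    Complex.cpow_ofReal_re, norm_mul, norm_neg, Complex.norm_I, one_mul, rpow_mul (norm_nonneg t),
    rpow_two, norm_pow]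

lemma norm_expWeightOuter_le (hβ₀ : 0 ≤ β) (hβ : β < 1 / 2) {t : ℂ} (ht : 0 ≤ t.im) :
    ‖expWeightOuter β t‖ ≤ exp (-‖t ^ 2‖ ^ β) := by
  have harg : |(-Complex.I * t).arg| ≤ π / 2 :=
    Complex.abs_arg_le_pi_div_two_iff.2 (by simpa using ht)
  have hcos : cos (π * β) ≤ cos ((-Complex.I * t).arg * (2 * β)) := by
    rw [← cos_abs (_ * (2 * β)), abs_mul, abs_of_nonneg (by positivity : 0 ≤ 2 * β)]
    exact cos_le_cos_of_nonneg_of_le_pi (by positivity) (by nlinarith [pi_pos]) (by nlinarith)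
  rw [norm_expWeightOuter, mul_div_assoc]
  gcongr
  exact le_mul_of_one_le_right (by positivity) ((one_le_div (cos_pi_mul_pos hβ₀ hβ)).2 hcos)

lemma exp_neg_le_norm_expWeightOuter (hβ₀ : 0 ≤ β) (hβ : β < 1 / 2) (t : ℂ) :
    exp (-(‖t ^ 2‖ ^ β / cos (π * β))) ≤ ‖expWeightOuter β t‖ := by
  have hpos := cos_pi_mul_pos hβ₀ hβ
  rw [norm_expWeightOuter]
  gcongr
  exact mul_le_of_le_one_right (by positivity) (cos_le_one _)

lemma diffContOnCl_expWeightOuter (hβ : 0 < β) :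
    DiffContOnCl ℂ (expWeightOuter β) {t | 0 < t.im} := by
  have hrot : Differentiable ℂ fun t : ℂ ↦ -Complex.I * t := by fun_prop
  have hpow : DiffContOnCl ℂ (fun t ↦ (-Complex.I * t) ^ ((2 * β : ℝ) : ℂ)) {t | 0 < t.im} := by
    refine ⟨fun t ht ↦ ?_, fun t ht ↦ ?_⟩
    · exact ((hrot t).cpow_const (.inl (by simpa using ht))).differentiableWithinAt
    · rw [Complex.closure_setOfPred_lt_im] at ht
      exact (ContinuousAt.comp (Complex.continuousAt_cpow_const_of_re_pos
        (.inl (by simpa using ht)) (by simpa using hβ))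
          hrot.continuous.continuousAt).continuousWithinAt
  have hexp : Differentiable ℂ fun w : ℂ ↦ Complex.exp (-(w / cos (π * β))) := by fun_prop
  exact hexp.comp_diffContOnCl hpow

lemma exists_norm_eval_mul_expWeightOuter_le (hβ₀ : 0 < β) (hβ : β < 1 / 2) (Q : ℂ[X]) :
    ∃ K, ∀ t : ℂ, 0 ≤ t.im → ‖Q.eval t * expWeightOuter β t‖ ≤ K := by
  obtain ⟨K, hK⟩ := isBigO_top.1 (isBigO_top_eval_exp_norm_rpow (mul_pos two_pos hβ₀) Q)
  refine ⟨K, fun t ht ↦ ?_⟩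
  have hgrowth : ‖Q.eval t‖ ≤ K * exp (‖t ^ 2‖ ^ β) := by
    simpa only [norm_of_nonneg (exp_pos _).le, rpow_mul (norm_nonneg t), rpow_two, norm_pow]
      using hK t
  calc ‖Q.eval t * expWeightOuter β t‖
      ≤ K * exp (‖t ^ 2‖ ^ β) * exp (-‖t ^ 2‖ ^ β) := by
        rw [norm_mul]
        exact mul_le_mul hgrowth (norm_expWeightOuter_le hβ₀.le hβ ht) (norm_nonneg _)
          ((norm_nonneg _).trans hgrowth)
    _ = K := by rw [mul_assoc, ← exp_add, add_neg_cancel, exp_zero, mul_one]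

end OuterFunction

section PointwiseBound

variable {β : ℝ}

lemma exists_sq_eq_of_im_ne_zero {z : ℂ} (hz : z.im ≠ 0) : ∃ ζ : ℂ, 0 < ζ.im ∧ ζ ^ 2 = z := by
  obtain ⟨ζ, hζ⟩ := IsAlgClosed.exists_pow_nat_eq z two_pos
  have him : ζ.im ≠ 0 := fun h ↦ hz (by simp [← hζ, pow_two, h])
  rcases him.lt_or_gt with hneg | hpos
  · exact ⟨-ζ, by simpa using hneg, by rw [neg_sq, hζ]⟩
  · exact ⟨ζ, hpos, hζ⟩

lemma norm_sq_eval_sq_mul_exp_le (hβ₀ : 0 < β) (hβ : β < 1 / 2) (P : ℂ[X]) {ζ : ℂ}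
    (hζ : 0 < ζ.im) :
    ‖ζ‖ * ‖P.eval (ζ ^ 2)‖ ^ 2 * exp (-(‖ζ ^ 2‖ ^ β / cos (π * β))) ≤
      (π * ζ.im)⁻¹ * expWeightNormSq β P := by
  set Q : ℂ[X] := X * (P ^ 2).comp (X ^ 2)
  have norm_Q (t : ℂ) : ‖Q.eval t‖ = ‖t‖ * ‖P.eval (t ^ 2)‖ ^ 2 := by simp [Q]
  obtain ⟨K, hK⟩ := exists_norm_eval_mul_expWeightOuter_le hβ₀ hβ Q
  have hdiff : DiffContOnCl ℂ (fun t ↦ Q.eval t * expWeightOuter β t) {t | 0 < t.im} :=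
    Q.differentiable.diffContOnCl.smul (diffContOnCl_expWeightOuter hβ₀)
  have norm_ofReal_le (t : ℝ) : ‖Q.eval (t : ℂ) * expWeightOuter β t‖ ≤
      |t| * (‖P.eval ((t ^ 2 : ℝ) : ℂ)‖ ^ 2 * exp (-(t ^ 2) ^ β)) := by
    have houter := norm_expWeightOuter_le hβ₀.le hβ (t := t) (by simp)
    rw [← Complex.ofReal_pow, Complex.norm_real, norm_of_nonneg (sq_nonneg t)] at houter
    rw [norm_mul, norm_Q, Complex.norm_real, norm_eq_abs, ← Complex.ofReal_pow, mul_assoc]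
    gcongr
  calc ‖ζ‖ * ‖P.eval (ζ ^ 2)‖ ^ 2 * exp (-(‖ζ ^ 2‖ ^ β / cos (π * β)))
      ≤ ‖Q.eval ζ * expWeightOuter β ζ‖ := by
        rw [norm_mul, norm_Q]
        gcongr
        exact exp_neg_le_norm_expWeightOuter hβ₀.le hβ ζ
    _ ≤ (π * ζ.im)⁻¹ * ∫ t : ℝ, |t| * (‖P.eval ((t ^ 2 : ℝ) : ℂ)‖ ^ 2 * exp (-(t ^ 2) ^ β)) :=
        norm_le_integral_of_norm_ofReal_le hdiff hK
          (integrable_abs_mul_comp_sq (integrableOn_norm_sq_eval_mul_exp_neg_rpow hβ₀ P))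
          norm_ofReal_le hζ
    _ = (π * ζ.im)⁻¹ * expWeightNormSq β P := by
        rw [integral_abs_mul_comp_sq fun x ↦ ‖P.eval (x : ℂ)‖ ^ 2 * exp (-x ^ β), expWeightNormSq]

lemma norm_sq_eval_mul_abs_im_le (hβ₀ : 0 < β) (hβ : β < 1 / 2) (P : ℂ[X]) (z : ℂ) :
    ‖P.eval z‖ ^ 2 * |z.im| ≤ 2 / π * exp (‖z‖ ^ β / cos (π * β)) * expWeightNormSq β P := by
  have hnorm_nonneg : 0 ≤ expWeightNormSq β P := integral_nonneg fun x ↦ by positivity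
  rcases eq_or_ne z.im 0 with hz | hz
  · rw [hz, abs_zero, mul_zero]
    positivity
  obtain ⟨ζ, hζ, rfl⟩ := exists_sq_eq_of_im_ne_zero hz
  have him : |(ζ ^ 2).im| ≤ 2 * ζ.im * ‖ζ‖ := by
    have hsq : (ζ ^ 2).im = 2 * ζ.im * ζ.re := by rw [pow_two, Complex.mul_im]; ring
    rw [hsq, abs_mul, abs_of_pos (mul_pos two_pos hζ)]
    gcongr
    exact Complex.abs_re_le_norm ζ
  have hbound := norm_sq_eval_sq_mul_exp_le hβ₀ hβ P hζ
  rw [exp_neg, ← div_eq_mul_inv, div_le_iff₀ (exp_pos _)] at hbound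
  calc ‖P.eval (ζ ^ 2)‖ ^ 2 * |(ζ ^ 2).im|
      ≤ ‖P.eval (ζ ^ 2)‖ ^ 2 * (2 * ζ.im * ‖ζ‖) := by gcongr
    _ = 2 * ζ.im * (‖ζ‖ * ‖P.eval (ζ ^ 2)‖ ^ 2) := by ring
    _ ≤ 2 * ζ.im *
        ((π * ζ.im)⁻¹ * expWeightNormSq β P * exp (‖ζ ^ 2‖ ^ β / cos (π * β))) := by gcongr
    _ = 2 / π * exp (‖ζ ^ 2‖ ^ β / cos (π * β)) * expWeightNormSq β P := by field_simp

lemma norm_sq_eval_mul_sq_sub_sq_le (hβ₀ : 0 < β) (hβ : β < 1 / 2) (P : ℂ[X]) {R : ℝ} {z : ℂ}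
    (hz : ‖z‖ < R) :
    ‖P.eval z‖ ^ 2 * (R ^ 2 - ‖z‖ ^ 2) ≤
      2 * R * (2 / π * exp (R ^ β / cos (π * β)) * expWeightNormSq β P) := by
  rw [← norm_pow (P.eval z), ← eval_pow]
  refine norm_mul_sq_sub_sq_le_of_norm_mul_abs_im_le (P ^ 2).differentiable.diffContOnCl
    (fun w hw ↦ ?_) hz
  rw [eval_pow, norm_pow, ← hw]
  exact norm_sq_eval_mul_abs_im_le hβ₀ hβ P w

theorem sum_sq_norm_coeff_le (hβ₀ : 0 < β) (hβ : β < 1 / 2) (P : ℂ[X]) :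
    ∑ i ∈ P.support, ‖P.coeff i‖ ^ 2 ≤
      8 / (3 * π) * exp (2 ^ β / cos (π * β)) * expWeightNormSq β P := by
  rw [P.sum_sq_norm_coeff_eq_circleAverage]
  refine Real.circleAverage_mono_on_of_le_circle
    (ContinuousOn.circleIntegrable' (by fun_prop)) fun z hz ↦ ?_
  rw [abs_one, mem_sphere_zero_iff_norm] at hz
  have hdisc := norm_sq_eval_mul_sq_sub_sq_le hβ₀ hβ P (hz.trans_lt one_lt_two)
  rw [hz] at hdisc
  calc ‖P.eval z‖ ^ 2 = ‖P.eval z‖ ^ 2 * (2 ^ 2 - 1 ^ 2) / 3 := by ring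
    _ ≤ 2 * 2 * (2 / π * exp (2 ^ β / cos (π * β)) * expWeightNormSq β P) / 3 := by gcongr
    _ = 8 / (3 * π) * exp (2 ^ β / cos (π * β)) * expWeightNormSq β P := by ring

end PointwiseBound

section HankelMatrix

lemma dotProduct_mulVec_eq_integral_eval_sq {α : Type*} [MeasurableSpace α] {ν : Measure α}
    {φ w : α → ℝ} (hint : ∀ n : ℕ, Integrable (fun a ↦ φ a ^ n * w a) ν) {n : ℕ}
    {A : Matrix (Fin n) (Fin n) ℝ} (hA : ∀ j k, A j k = ∫ a, φ a ^ (j + k : ℕ) * w a ∂ν)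
    (v : Fin n → ℝ) :
    v ⬝ᵥ A *ᵥ v = ∫ a, (∑ j, v j * φ a ^ (j : ℕ)) ^ 2 * w a ∂ν := by
  have hexpand (a : α) : (∑ j, v j * φ a ^ (j : ℕ)) ^ 2 * w a =
      ∑ j, ∑ k, v j * v k * (φ a ^ (j + k : ℕ) * w a) := by
    rw [sq, Finset.sum_mul_sum, Finset.sum_mul]
    simp_rw [Finset.sum_mul]
    refine Finset.sum_congr rfl fun j _ ↦ Finset.sum_congr rfl fun k _ ↦ ?_
    ring
  have hterm (j k : Fin n) :
      Integrable (fun a ↦ v j * v k * (φ a ^ (j + k : ℕ) * w a)) ν := (hint _).const_mul _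
  simp_rw [hexpand]
  rw [integral_finsetSum _ fun j _ ↦ integrable_finsetSum _ fun k _ ↦ hterm j k]
  simp_rw [integral_finsetSum _ fun k _ ↦ hterm _ k, integral_const_mul, ← hA, dotProduct,
    Matrix.mulVec, dotProduct, Finset.mul_sum]
  refine Finset.sum_congr rfl fun j _ ↦ Finset.sum_congr rfl fun k _ ↦ ?_
  ring

lemma le_of_hasEigenvalue_toLin' {n : Type*} [Fintype n] [DecidableEq n] {A : Matrix n n ℝ}
    {c x : ℝ} (hA : ∀ v, c * (v ⬝ᵥ v) ≤ v ⬝ᵥ A *ᵥ v)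
    (hx : Module.End.HasEigenvalue (Matrix.toLin' A) x) : c ≤ x := by
  obtain ⟨v, hv⟩ := hx.exists_hasEigenvector
  have hAv : A *ᵥ v = x • v := by simpa using hv.apply_eq_smul
  have hpos : 0 < v ⬝ᵥ v := by simpa using Matrix.dotProduct_star_self_pos_iff.2 hv.2
  have hquad := hA v
  rw [hAv, dotProduct_smul, smul_eq_mul] at hquad
  exact le_of_mul_le_mul_right hquad hpos

variable {β : ℝ}

lemma dotProduct_self_le_of_hankel (hβ₀ : 0 < β) (hβ : β < 1 / 2) {n : ℕ}
    {A : Matrix (Fin n) (Fin n) ℝ}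
    (hA : ∀ j k, A j k = ∫ x in Set.Ioi (0 : ℝ), x ^ (j + k : ℕ) * exp (-x ^ β))
    (v : Fin n → ℝ) :
    v ⬝ᵥ v ≤ 8 / (3 * π) * exp (2 ^ β / cos (π * β)) * (v ⬝ᵥ A *ᵥ v) := by
  set P : ℂ[X] := Polynomial.ofFn n fun j ↦ (v j : ℂ)
  have eval_P (x : ℝ) : P.eval (x : ℂ) = ((∑ j, v j * x ^ (j : ℕ) : ℝ) : ℂ) := by
    simp [P, ofFn_eq_sum_monomial, eval_finsetSum]
  have sum_coeff : ∑ i ∈ P.support, ‖P.coeff i‖ ^ 2 = v ⬝ᵥ v := by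
    calc ∑ i ∈ P.support, ‖P.coeff i‖ ^ 2 = ∑ j : Fin n, ‖P.coeff j‖ ^ 2 :=
          (P.sum_fin (fun _ a ↦ ‖a‖ ^ 2) (by simp) (ofFn_degree_lt _)).symm
      _ = v ⬝ᵥ v := Finset.sum_congr rfl fun j _ ↦ by
          rw [ofFn_coeff_eq_val_of_lt _ j.2, Complex.norm_real, norm_eq_abs, sq_abs, sq]
  have norm_P : expWeightNormSq β P = v ⬝ᵥ A *ᵥ v := by
    rw [dotProduct_mulVec_eq_integral_eval_sq (integrableOn_pow_mul_exp_neg_rpow hβ₀) hA,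
      expWeightNormSq]
    simp_rw [eval_P, Complex.norm_real, norm_eq_abs, sq_abs]
  rw [← sum_coeff, ← norm_P]
  exact sum_sq_norm_coeff_le hβ₀ hβ P

end HankelMatrix

/-- For the weight `exp(−x^β)` on `[0,∞)` with `0 < β < 1/2`,
the smallest eigenvalues `lam N` of the Hankel matrices are bounded below by a
positive constant: the smallest eigenvalue of the infinite Hankel matrix is
positive. -/
theorem smallest_eigenvalue_bounded_below
    (β : ℝ) (hβ0 : 0 < β) (hβ : β < 1/2)
    (μ : ℕ → ℝ) (hμ : ∀ k, μ k = ∫ x in Set.Ioi (0:ℝ), x ^ k * Real.exp (-(x ^ β)))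
    (H : (N : ℕ) → Matrix (Fin (N + 1)) (Fin (N + 1)) ℝ)
    (hH : ∀ N, ∀ j k : Fin (N + 1), H N j k = μ ((j : ℕ) + (k : ℕ)))
    (hpd : ∀ N, (H N).PosDef)
    (lam : ℕ → ℝ)
    (hlam : ∀ N, IsLeast
      {x : ℝ | Module.End.HasEigenvalue (Matrix.toLin' (H N)) x} (lam N)) :
    ∃ c : ℝ, 0 < c ∧ ∀ N : ℕ, c ≤ lam N := by
  set C := 8 / (3 * π) * exp (2 ^ β / cos (π * β))
  have hC_pos : 0 < C := by positivity
  refine ⟨C⁻¹, inv_pos.2 hC_pos, fun N ↦ le_of_hasEigenvalue_toLin' (fun v ↦ ?_) (hlam N).1⟩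
  rw [inv_mul_le_iff₀ hC_pos]
  exact dotProduct_self_le_of_hankel hβ0 hβ (fun j k ↦ by rw [hH, hμ]) v
end
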